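/- arXiv:1707.02916 — 5 statements merged into one kernel-verified Lean document; each statement's English description precedes it below -/
import Mathlib

section
/- Let k ≥ 3 and let H be a C_k-decomposable graph, where C_k is the cycle on k vertices (k even or odd). Then for every η > 0 there exists ρ > 0 and n₀ such that for every d ∈ (0,1] and every (ρ,d)-dense graph G with at least n₀ vertices, t_H(G) ≥ d^{|E(H)|} − η. -/
open MeasureTheory

/-- The homomorphism density `t_H(G)`. -/
noncomputable def homDensity {α β : Type*} [Fintype α] [Fintype β]
    (H : SimpleGraph α) (G : SimpleGraph β) : ℝ :=
  (Nat.card (H →g G) : ℝ) / (Fintype.card β : ℝ) ^ (Fintype.card α)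

/-- The number of edges of a graph. -/
noncomputable def edgeCount {α : Type*} (H : SimpleGraph α) : ℕ :=
  Nat.card H.edgeSet

/-- `G` is `(ρ,d)`-dense: every vertex subset `X` with `|X| ≥ ρ|V(G)|`
spans at least `(d/2)|X|²` edges. -/
def LocallyDense {β : Type*} [Fintype β] (G : SimpleGraph β) (ρ d : ℝ) : Prop :=
  ∀ X : Finset β, ρ * (Fintype.card β : ℝ) ≤ (X.card : ℝ) →
    d / 2 * (X.card : ℝ) ^ 2 ≤
      (Nat.card {e : Sym2 β // e ∈ G.edgeSet ∧ ∀ v ∈ e, v ∈ X} : ℝ)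

/-- `(bag, T)` is a tree decomposition of `H`. -/
def IsTreeDecomp {α ι : Type*} [DecidableEq α] (H : SimpleGraph α) (bag : ι → Finset α)
    (T : SimpleGraph ι) : Prop :=
  T.IsTree ∧
  (∀ v : α, ∃ X, v ∈ bag X) ∧
  (∀ u v : α, H.Adj u v → ∃ X, u ∈ bag X ∧ v ∈ bag X) ∧
  (∀ X Y Z : ι, ∀ p : T.Walk X Y, p.IsPath → Z ∈ p.support →
    bag X ∩ bag Y ⊆ bag Z)

/-- `(bag, T)` is a `J`-decomposition of `H`: a tree decomposition in which every
bag induces a copy of `J`, and for adjacent bags there is an isomorphism between the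
induced copies of `J` fixing the intersection pointwise. -/
def IsJDecomp {α ι γ : Type*} [DecidableEq α] (H : SimpleGraph α) (J : SimpleGraph γ)
    (bag : ι → Finset α) (T : SimpleGraph ι) : Prop :=
  IsTreeDecomp H bag T ∧
  (∀ X : ι, Nonempty (H.induce ↑(bag X) ≃g J)) ∧
  (∀ X Y : ι, T.Adj X Y → ∃ e : H.induce ↑(bag X) ≃g H.induce ↑(bag Y),
      ∀ (v : α) (h1 : v ∈ bag X) (h2 : v ∈ bag Y),
        ((e ⟨v, h1⟩ : ↑(bag Y)) : α) = v)

/-- `H` is `J`-decomposable. -/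
def JDecomposable {α γ : Type*} [DecidableEq α] (H : SimpleGraph α) (J : SimpleGraph γ) : Prop :=
  ∃ (ι : Type) (_ : Fintype ι) (bag : ι → Finset α) (T : SimpleGraph ι),
    IsJDecomp H J bag T


open Finset in
theorem LD.expect_swap {α β : Type*} [Fintype α] [DecidableEq α] [Fintype β]
    (U : Finset α) (F : (α → β) → ℝ) :
    (Finset.univ.expect fun φ : α → β => Finset.univ.expect fun ψ : α → β =>
      F (U.piecewise φ ψ)) = Finset.univ.expect fun φ : α → β => F φ := by
  classical
  have h1 : (Finset.univ.expect fun φ : α → β => Finset.univ.expect fun ψ : α → β =>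
      F (U.piecewise φ ψ)) =
      (Finset.univ.expect fun p : (α → β) × (α → β) => F (U.piecewise p.1 p.2)) := by
    rw [← Finset.univ_product_univ, Finset.expect_product]
  have h2 : (Finset.univ.expect fun φ : α → β => F φ) =
      (Finset.univ.expect fun p : (α → β) × (α → β) => F p.1) := by
    rw [← Finset.univ_product_univ, Finset.expect_product]
    refine Finset.expect_congr rfl fun φ _ => ?_
    exact (Finset.expect_const ⟨φ, Finset.mem_univ _⟩ _).symm
  rw [h1, h2]
  have inv : Function.Involutive (fun p : (α → β) × (α → β) =>
      ((U.piecewise p.1 p.2, U.piecewise p.2 p.1) : (α → β) × (α → β))) := by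
    rintro ⟨a, b⟩
    ext x <;> by_cases hx : x ∈ U <;> simp [hx]
  exact Fintype.expect_equiv inv.toPerm _ _ (fun p => rfl)

theorem LD.expect_comp {α β κ : Type*} [Fintype α] [DecidableEq α] [Fintype β] [Nonempty β]
    [Fintype κ] [DecidableEq κ]
    (s : κ → α) (hs : Function.Injective s) (F : (κ → β) → ℝ) :
    (Finset.univ.expect fun φ : α → β => F (φ ∘ s)) =
      Finset.univ.expect fun θ : κ → β => F θ := by
  classical
  have h1 : (Finset.univ.expect fun φ : α → β => F (φ ∘ s)) =
      (Finset.univ.expect fun p : (α → β) × (κ → β) => F (p.1 ∘ s)) := by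
    rw [← Finset.univ_product_univ, Finset.expect_product]
    refine Finset.expect_congr rfl fun φ _ => ?_
    exact (Finset.expect_const Finset.univ_nonempty _).symm
  have h2 : (Finset.univ.expect fun θ : κ → β => F θ) =
      (Finset.univ.expect fun p : (α → β) × (κ → β) => F p.2) := by
    rw [← Finset.univ_product_univ, Finset.expect_product]
    exact (Finset.expect_const Finset.univ_nonempty _).symm
  rw [h1, h2]
  have inv : Function.Involutive (fun p : (α → β) × (κ → β) =>
      ((Function.extend s p.2 p.1, p.1 ∘ s) : (α → β) × (κ → β))) := by
    rintro ⟨a, b⟩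
    refine Prod.ext ?_ ?_
    · funext x
      by_cases hx : ∃ i, s i = x
      · obtain ⟨i, rfl⟩ := hx
        simp [hs.extend_apply]
      · simp [Function.extend_apply' _ _ _ hx]
    · funext i
      simp [hs.extend_apply]
  exact Fintype.expect_equiv inv.toPerm _ _ (fun p => rfl)

/-- `f` depends only on the coordinates in `X`. -/
def LD.Dep {α β : Type*} (X : Finset α) (f : (α → β) → ℝ) : Prop :=
  ∀ φ ψ : α → β, (∀ x ∈ X, φ x = ψ x) → f φ = f ψ

/-- conditional expectation on the coordinates in `X`. -/
noncomputable def LD.cond {α β : Type*} [Fintype α] [DecidableEq α] [Fintype β]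
    (X : Finset α) (f : (α → β) → ℝ) (φ : α → β) : ℝ :=
  Finset.univ.expect fun ψ : α → β => f (X.piecewise φ ψ)

set_option linter.unusedSectionVars false

namespace LD

variable {α β : Type*} [Fintype α] [DecidableEq α] [Fintype β]

theorem Dep.mono {X Y : Finset α} (h : X ⊆ Y) {f : (α → β) → ℝ} (hf : Dep X f) : Dep Y f :=
  fun φ ψ hh => hf φ ψ fun x hx => hh x (h hx)

theorem dep_cond (X : Finset α) (f : (α → β) → ℝ) : Dep X (cond X f) := by
  intro φ ψ h
  unfold cond
  refine Finset.expect_congr rfl fun χ _ => ?_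
  congr 1
  funext x
  by_cases hx : x ∈ X <;> simp [hx, h]

theorem cond_mul {X : Finset α} (f h : (α → β) → ℝ) (hh : Dep X h) (φ : α → β) :
    cond X (fun φ => f φ * h φ) φ = cond X f φ * h φ := by
  unfold cond
  rw [Finset.expect_mul]
  refine Finset.expect_congr rfl fun χ _ => ?_
  have : h (X.piecewise φ χ) = h φ := hh _ _ fun x hx => by simp [hx]
  simp only [this]

theorem expect_cond (X : Finset α) (f : (α → β) → ℝ) :
    Finset.univ.expect (cond X f) = Finset.univ.expect f := expect_swap X f

theorem expect_mul_dep {X : Finset α} (f h : (α → β) → ℝ) (hh : Dep X h) :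
    (Finset.univ.expect fun φ => f φ * h φ) = Finset.univ.expect fun φ => cond X f φ * h φ := by
  rw [← expect_cond X]
  exact Finset.expect_congr rfl fun φ _ => cond_mul f h hh φ

theorem cond_cond {X Y : Finset α} (hXY : X ⊆ Y) (f : (α → β) → ℝ) (φ : α → β) :
    cond X (cond Y f) φ = cond X f φ := by
  unfold cond
  rw [← expect_swap Y (fun ψ => f (X.piecewise φ ψ))]
  refine Finset.expect_congr rfl fun ψ _ => Finset.expect_congr rfl fun χ _ => ?_
  congr 1
  funext x
  by_cases hx : x ∈ X
  · simp [hx, hXY hx]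
  · by_cases hy : x ∈ Y <;> simp [hx, hy]

theorem cond_inter {U X : Finset α} (f : (α → β) → ℝ) (hf : Dep X f) (φ : α → β) :
    cond U f φ = cond (U ∩ X) f φ := by
  unfold cond
  refine Finset.expect_congr rfl fun ψ _ => hf _ _ fun x hx => ?_
  by_cases hu : x ∈ U <;> simp [hu, hx]

theorem cond_nonneg {X : Finset α} {f : (α → β) → ℝ} (hf : ∀ φ, 0 ≤ f φ) (φ : α → β) :
    0 ≤ cond X f φ := Finset.expect_nonneg fun _ _ => hf _

theorem eq_zero_of_cond {X : Finset α} {f : (α → β) → ℝ} (hf : ∀ φ, 0 ≤ f φ) (φ : α → β)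
    (h : cond X f φ = 0) : f φ = 0 := by
  unfold cond at h
  rw [Finset.expect_eq_zero_iff_of_nonneg fun _ _ => hf _] at h
  have e : X.piecewise φ φ = φ := by
    funext x
    by_cases hx : x ∈ X <;> simp [hx]
  have h2 := h φ (Finset.mem_univ _)
  rwa [e] at h2

theorem cond_self {X : Finset α} {f : (α → β) → ℝ} (hf : Dep X f) (φ : α → β) :
    cond X f φ = f φ := by
  unfold cond
  rw [← Finset.expect_const (s := (Finset.univ : Finset (α → β))) ⟨φ, Finset.mem_univ _⟩ (f φ)]
  exact Finset.expect_congr rfl fun ψ _ => hf _ _ fun x hx => by simp [hx]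

theorem entropy_ge (g J : (α → β) → ℝ) (hg : ∀ φ, 0 ≤ g φ) (hg1 : Finset.univ.expect g = 1)
    (hJ0 : ∀ φ, 0 ≤ J φ) (hJ : ∀ φ, g φ ≠ 0 → J φ = 1) (hpos : 0 < Finset.univ.expect J) :
    - Real.log (Finset.univ.expect J) ≤
      Finset.univ.expect fun φ => g φ * Real.log (g φ) := by
  set τ := Finset.univ.expect J with hτ
  have key : ∀ φ, g φ * (-Real.log τ) + (g φ - J φ * τ⁻¹) ≤ g φ * Real.log (g φ) := by
    intro φ
    by_cases h : g φ = 0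
    · have := mul_nonneg (hJ0 φ) (inv_pos.2 hpos).le
      simp [h]; linarith
    · have h0 : 0 < g φ := lt_of_le_of_ne (hg φ) (Ne.symm h)
      rw [hJ φ h, one_mul]
      have h2 : 0 < g φ * τ := by positivity
      have h1 := Real.one_sub_inv_le_log_of_pos h2
      rw [Real.log_mul h0.ne' hpos.ne'] at h1
      have h3 := mul_le_mul_of_nonneg_left h1 h0.le
      have h4 : g φ * (1 - (g φ * τ)⁻¹) = g φ - τ⁻¹ := by field_simp
      rw [h4] at h3
      linarith
  have h := Finset.expect_le_expect (s := Finset.univ) fun φ _ => key φ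
  rw [Finset.expect_add_distrib, ← Finset.expect_mul, Finset.expect_sub_distrib,
    ← Finset.expect_mul, hg1, ← hτ, mul_inv_cancel₀ hpos.ne'] at h
  linarith

end LD

namespace LD

variable {α β : Type*} [Fintype α] [DecidableEq α] [Fintype β]

open Classical in
/-- Indicator that `φ` restricted to `X` is a homomorphism from `H[X]`. -/
noncomputable def ind (H : SimpleGraph α) (G : SimpleGraph β) (X : Finset α) (φ : α → β) : ℝ :=
  if (∀ u ∈ X, ∀ v ∈ X, H.Adj u v → G.Adj (φ u) (φ v)) then 1 else 0

/-- homomorphism density of the induced subgraph on `X`. -/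
noncomputable def tden (H : SimpleGraph α) (G : SimpleGraph β) (X : Finset α) : ℝ :=
  Finset.univ.expect (ind H G X)

/-- number of edges inside `X`. -/
noncomputable def eIn (H : SimpleGraph α) (X : Finset α) : ℕ :=
  Set.ncard {e : Sym2 α | e ∈ H.edgeSet ∧ ∀ v ∈ e, v ∈ X}

theorem eIn_super (H : SimpleGraph α) (U Y : Finset α) :
    eIn H U + eIn H Y ≤ eIn H (U ∪ Y) + eIn H (U ∩ Y) := by
  unfold eIn
  rw [← Set.ncard_union_add_ncard_inter _ _ (Set.toFinite _) (Set.toFinite _)]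
  refine Nat.add_le_add (Set.ncard_le_ncard ?_ (Set.toFinite _)) (Set.ncard_le_ncard ?_ (Set.toFinite _))
  · rintro e (⟨h1, h2⟩ | ⟨h1, h2⟩)
    · exact ⟨h1, fun v hv => Finset.mem_union_left _ (h2 v hv)⟩
    · exact ⟨h1, fun v hv => Finset.mem_union_right _ (h2 v hv)⟩
  · rintro e ⟨⟨h1, h2⟩, ⟨h3, h4⟩⟩
    exact ⟨h1, fun v hv => Finset.mem_inter.2 ⟨h2 v hv, h4 v hv⟩⟩

theorem eIn_mono (H : SimpleGraph α) {S Y : Finset α} (h : S ⊆ Y) : eIn H S ≤ eIn H Y := by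
  unfold eIn
  refine Set.ncard_le_ncard ?_ (Set.toFinite _)
  rintro e ⟨h1, h2⟩
  exact ⟨h1, fun v hv => h (h2 v hv)⟩

variable (H : SimpleGraph α) (G : SimpleGraph β)

theorem ind_nonneg (X : Finset α) (φ : α → β) : 0 ≤ ind H G X φ := by
  unfold ind; split_ifs <;> norm_num

theorem ind_cases (X : Finset α) (φ : α → β) : ind H G X φ = 0 ∨ ind H G X φ = 1 := by
  unfold ind; split_ifs <;> simp

theorem dep_ind (X : Finset α) : Dep X (ind H G X) := by
  intro φ ψ h
  unfold ind
  congr 1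
  refine propext (forall₂_congr fun u hu => forall₂_congr fun v hv => ?_)
  rw [h u hu, h v hv]

theorem ind_of_subset {S X : Finset α} (h : S ⊆ X) (φ : α → β) (hx : ind H G X φ ≠ 0) :
    ind H G S φ = 1 := by
  unfold ind at *
  rw [if_pos]
  intro u hu v hv
  by_contra hc
  apply hx
  rw [if_neg]
  intro h2
  exact hc (h2 u (h hu) v (h hv))

theorem ind_mono {S X : Finset α} (h : S ⊆ X) (φ : α → β) : ind H G X φ ≤ ind H G S φ := by
  rcases ind_cases H G X φ with h0 | h0
  · rw [h0]; exact ind_nonneg H G S φ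
  · rw [h0, ind_of_subset H G h φ (by rw [h0]; norm_num)]

theorem tden_mono {S X : Finset α} (h : S ⊆ X) : tden H G X ≤ tden H G S :=
  Finset.expect_le_expect fun φ _ => ind_mono H G h φ

theorem tden_empty [Nonempty β] : tden H G ∅ = 1 := by
  unfold tden ind
  simp

/-- invariance under the isomorphism fixing the intersection -/
theorem cond_ind_iso {X Y : Finset α}
    (h : ∃ e : H.induce (↑X : Set α) ≃g H.induce (↑Y : Set α),
      ∀ (v : α) (h1 : v ∈ X) (h2 : v ∈ Y), ((e ⟨v, h1⟩ : (↑Y : Set α)) : α) = v) (φ : α → β) :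
    cond (X ∩ Y) (ind H G X) φ = cond (X ∩ Y) (ind H G Y) φ := by
  classical
  obtain ⟨e, he⟩ := h
  let e' : {x // x ∈ X} ≃ {x // x ∈ Y} := e.toEquiv
  let σ : Equiv.Perm α := e'.extendSubtype
  have hσX : ∀ x (hx : x ∈ X), σ x = (e ⟨x, hx⟩ : α) := fun x hx =>
    Equiv.extendSubtype_apply_of_mem e' x hx
  have hσY : ∀ x, x ∈ X → σ x ∈ Y := fun x hx => by
    rw [hσX x hx]; exact (e ⟨x, hx⟩).2
  have hfix : ∀ x ∈ X ∩ Y, σ x = x := fun x hx => by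
    rw [Finset.mem_inter] at hx
    rw [hσX x hx.1, he x hx.1 hx.2]
  have hadj : ∀ u (hu : u ∈ X) v (hv : v ∈ X), H.Adj (σ u) (σ v) ↔ H.Adj u v := by
    intro u hu v hv
    rw [hσX u hu, hσX v hv]
    exact e.map_rel_iff (a := ⟨u, hu⟩) (b := ⟨v, hv⟩)
  have hsurj : ∀ y ∈ Y, ∃ x ∈ X, σ x = y := by
    intro y hy
    refine ⟨(e.symm ⟨y, hy⟩ : α), (e.symm ⟨y, hy⟩).2, ?_⟩
    rw [hσX _ (e.symm ⟨y, hy⟩).2]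
    simp
  have hpt : ∀ ψ : α → β, ∀ x ∈ X,
      (X ∩ Y).piecewise φ (ψ ∘ σ) x = (X ∩ Y).piecewise φ ψ (σ x) := by
    intro ψ x hx
    by_cases hS : x ∈ X ∩ Y
    · rw [hfix x hS]
      simp only [Finset.piecewise_eq_of_mem _ _ _ hS]
    · have : σ x ∉ X ∩ Y := by
        intro hc
        apply hS
        have := hfix _ hc
        have := σ.injective this
        rwa [this] at hc
      rw [Finset.piecewise_eq_of_notMem _ _ _ hS, Finset.piecewise_eq_of_notMem _ _ _ this]
      rfl
  unfold cond
  symm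
  refine Fintype.expect_equiv (σ.symm.arrowCongr (Equiv.refl β)) _ _ fun ψ => ?_
  have hψ : (σ.symm.arrowCongr (Equiv.refl β)) ψ = ψ ∘ σ := by
    funext x; simp [Equiv.arrowCongr]
  rw [hψ]
  unfold ind
  congr 1
  refine propext ⟨fun hh u hu v hv huv => ?_, fun hh u hu v hv huv => ?_⟩
  · rw [hpt ψ u hu, hpt ψ v hv]
    exact hh _ (hσY u hu) _ (hσY v hv) ((hadj u hu v hv).2 huv)
  · obtain ⟨u', hu', rfl⟩ := hsurj u hu
    obtain ⟨v', hv', rfl⟩ := hsurj v hv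
    rw [← hpt ψ u' hu', ← hpt ψ v' hv']
    exact hh u' hu' v' hv' ((hadj u' hu' v' hv').1 huv)

/-- normalized density -/
noncomputable def gden (X : Finset α) (φ : α → β) : ℝ := ind H G X φ * (tden H G X)⁻¹

theorem cond_gden (S X : Finset α) (φ : α → β) :
    cond S (gden H G X) φ = cond S (ind H G X) φ * (tden H G X)⁻¹ := by
  unfold cond gden
  rw [Finset.expect_mul]

theorem expect_gden (X : Finset α) (h : 0 < tden H G X) :
    Finset.univ.expect (gden H G X) = 1 := by
  unfold gden
  rw [← Finset.expect_mul]
  exact mul_inv_cancel₀ h.ne'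

theorem gden_nonneg (X : Finset α) (h : 0 < tden H G X) (φ : α → β) : 0 ≤ gden H G X φ :=
  mul_nonneg (ind_nonneg H G X φ) (inv_pos.2 h).le

theorem dep_gden (X : Finset α) : Dep X (gden H G X) := by
  intro φ ψ h
  unfold gden
  rw [dep_ind H G X φ ψ h]

theorem entropy_gden (X : Finset α) (h : 0 < tden H G X) :
    (Finset.univ.expect fun φ => gden H G X φ * Real.log (gden H G X φ)) =
      - Real.log (tden H G X) := by
  have : ∀ φ, gden H G X φ * Real.log (gden H G X φ) =
      gden H G X φ * (- Real.log (tden H G X)) := by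
    intro φ
    unfold gden
    rcases ind_cases H G X φ with h0 | h0
    · simp [h0]
    · simp [h0]
  rw [Finset.expect_congr rfl fun φ _ => this φ, ← Finset.expect_mul, expect_gden H G X h, one_mul]

theorem tden_eq_of_iso {X Y : Finset α}
    (h : ∃ e : H.induce (↑X : Set α) ≃g H.induce (↑Y : Set α),
      ∀ (v : α) (h1 : v ∈ X) (h2 : v ∈ Y), ((e ⟨v, h1⟩ : (↑Y : Set α)) : α) = v) :
    tden H G X = tden H G Y := by
  unfold tden
  rw [← expect_cond (X ∩ Y) (ind H G X), ← expect_cond (X ∩ Y) (ind H G Y)]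
  exact Finset.expect_congr rfl fun φ _ => cond_ind_iso H G h φ

/-- One gluing step. -/
theorem glue_step (U X Y : Finset α) (q : (α → β) → ℝ)
    (hq0 : ∀ φ, 0 ≤ q φ) (hqU : Dep U q)
    (hXU : X ⊆ U) (hS : U ∩ Y = X ∩ Y)
    (hqX : ∀ φ, cond X q φ = gden H G X φ)
    (hY : 0 < tden H G Y)
    (hiso : ∃ e : H.induce (↑X : Set α) ≃g H.induce (↑Y : Set α),
      ∀ (v : α) (h1 : v ∈ X) (h2 : v ∈ Y), ((e ⟨v, h1⟩ : (↑Y : Set α)) : α) = v) :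
    ∃ q' : (α → β) → ℝ, (∀ φ, 0 ≤ q' φ) ∧ Dep (U ∪ Y) q' ∧
      (∀ Z ⊆ U, ∀ φ, cond Z q' φ = cond Z q φ) ∧
      (∀ φ, cond Y q' φ = gden H G Y φ) ∧
      (Finset.univ.expect fun φ => q' φ * Real.log (q' φ)) ≤
        (Finset.univ.expect fun φ => q φ * Real.log (q φ))
          - Real.log (tden H G Y) + Real.log (tden H G (X ∩ Y)) := by
  classical
  set S := X ∩ Y with hSdef
  have hSX : S ⊆ X := Finset.inter_subset_left
  have hSY : S ⊆ Y := Finset.inter_subset_right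
  have hSU : S ⊆ U := hSX.trans hXU
  set gS : (α → β) → ℝ := cond S (gden H G Y) with hgS
  have hgS0 : ∀ φ, 0 ≤ gS φ := cond_nonneg (gden_nonneg H G Y hY)
  have hgSdep : Dep S gS := dep_cond _ _
  have hgSX : ∀ φ, cond S (gden H G X) φ = gS φ := by
    intro φ
    rw [hgS, cond_gden, cond_gden, cond_ind_iso H G hiso, tden_eq_of_iso H G hiso]
  have hqS : ∀ φ, cond S q φ = gS φ := by
    intro φ
    rw [← cond_cond hSX q φ, ← hgSX]
    congr 1
    funext ψ
    exact hqX ψ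
  have hg0 : ∀ φ, gS φ = 0 → gden H G Y φ = 0 := fun φ h =>
    eq_zero_of_cond (gden_nonneg H G Y hY) φ h
  have hq0' : ∀ φ, gS φ = 0 → q φ = 0 := fun φ h =>
    eq_zero_of_cond (X := S) hq0 φ (by rw [hqS, h])
  have hdepr : Dep Y (fun φ => gden H G Y φ * (gS φ)⁻¹) := by
    intro φ ψ h
    simp only
    rw [dep_gden H G Y φ ψ h, hgSdep.mono hSY φ ψ h]
  have hdepl : Dep U (fun φ => q φ * (gS φ)⁻¹) := by
    intro φ ψ h
    simp only
    rw [hqU φ ψ h, hgSdep.mono hSU φ ψ h]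
  let q' : (α → β) → ℝ := fun φ => q φ * (gden H G Y φ * (gS φ)⁻¹)
  have hq'alt : q' = fun φ => gden H G Y φ * (q φ * (gS φ)⁻¹) := by
    funext φ; simp only [q']; ring
  have hcU : ∀ φ, cond U q' φ = q φ := by
    intro φ
    rw [hq'alt, cond_mul _ _ hdepl, cond_inter _ (dep_gden H G Y), hS]
    change gS φ * (q φ * (gS φ)⁻¹) = q φ
    by_cases h : gS φ = 0
    · rw [hq0' φ h]; simp
    · field_simp
  have hcY : ∀ φ, cond Y q' φ = gden H G Y φ := by
    intro φ
    simp only [q']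
    rw [cond_mul _ _ hdepr, cond_inter _ hqU, Finset.inter_comm, hS, hqS]
    by_cases h : gS φ = 0
    · rw [hg0 φ h]; simp
    · field_simp
  have hcZ : ∀ Z ⊆ U, ∀ φ, cond Z q' φ = cond Z q φ := by
    intro Z hZ φ
    rw [← cond_cond hZ q' φ]
    congr 1
    funext ψ
    exact hcU ψ
  have hcS : ∀ φ, cond S q' φ = gS φ := fun φ => by rw [hcZ S hSU, hqS]
  refine ⟨q', fun φ => mul_nonneg (hq0 φ) (mul_nonneg (gden_nonneg H G Y hY φ)
    (inv_nonneg.2 (hgS0 φ))), ?_, hcZ, hcY, ?_⟩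
  · intro φ ψ h
    simp only [q']
    rw [hqU φ ψ fun x hx => h x (Finset.mem_union_left _ hx),
      dep_gden H G Y φ ψ fun x hx => h x (Finset.mem_union_right _ hx),
      hgSdep φ ψ fun x hx => h x (Finset.mem_union_left _ (hSU hx))]
  · have hpt : ∀ φ, q' φ * Real.log (q' φ) =
        q' φ * Real.log (q φ) + q' φ * Real.log (gden H G Y φ) - q' φ * Real.log (gS φ) := by
      intro φ
      by_cases h : q' φ = 0
      · simp [h]
      · have h1 : q φ ≠ 0 := fun h0 => h (by simp [q', h0])
        have h2 : gden H G Y φ ≠ 0 := fun h0 => h (by simp [q', h0])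
        have h3 : gS φ ≠ 0 := fun h0 => h (by simp [q', h0])
        have : Real.log (q' φ) = Real.log (q φ) + (Real.log (gden H G Y φ) - Real.log (gS φ)) := by
          simp only [q']
          rw [Real.log_mul h1 (mul_ne_zero h2 (inv_ne_zero h3)), Real.log_mul h2 (inv_ne_zero h3),
            Real.log_inv]
          ring
        rw [this]; ring
    rw [Finset.expect_congr rfl fun φ _ => hpt φ, Finset.expect_sub_distrib,
      Finset.expect_add_distrib]
    have d1 : Dep U (fun φ => Real.log (q φ)) := fun φ ψ h => by simp only [hqU φ ψ h]
    have d2 : Dep Y (fun φ => Real.log (gden H G Y φ)) := fun φ ψ h => by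
      simp only [dep_gden H G Y φ ψ h]
    have d3 : Dep S (fun φ => Real.log (gS φ)) := fun φ ψ h => by simp only [hgSdep φ ψ h]
    rw [expect_mul_dep q' _ d1, expect_mul_dep q' _ d2, expect_mul_dep q' _ d3]
    simp only [hcU, hcY, hcS]
    rw [entropy_gden H G Y hY]
    have hE := entropy_ge gS (ind H G S) hgS0 (by rw [hgS, expect_cond, expect_gden H G Y hY])
      (ind_nonneg H G S) (by
        intro φ hne
        by_contra hc
        apply hne
        rw [hgS, cond_gden]
        have h0 : ind H G S φ = 0 := (ind_cases H G S φ).resolve_right hc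
        have : cond S (ind H G Y) φ = 0 := by
          unfold cond
          apply Finset.expect_eq_zero
          intro ψ _
          by_contra hh
          have h1 := ind_of_subset H G hSY _ hh
          have h2 : ind H G S (S.piecewise φ ψ) = ind H G S φ :=
            dep_ind H G S _ _ fun x hx => by simp [hx]
          rw [h2, h0] at h1
          exact zero_ne_one h1
        rw [this, zero_mul])
      (lt_of_lt_of_le hY (tden_mono H G hSY))
    change - Real.log (tden H G S) ≤ _ at hE
    linarith

end LD

namespace LD

variable {α β : Type*} [Fintype α] [DecidableEq α] [Fintype β]

theorem exists_boundary {ι : Type*} (T : SimpleGraph ι) (hT : T.Connected) (P : ι → Prop)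
    (x y : ι) (hx : P x) (hy : ¬ P y) : ∃ a b, P a ∧ ¬ P b ∧ T.Adj a b := by
  obtain ⟨w⟩ := hT.preconnected x y
  induction w with
  | nil => exact absurd hx hy
  | @cons u v w h p ih =>
    by_cases hv : P v
    · exact ih hv hy
    · exact ⟨u, v, hx, hv, h⟩

theorem glue [Nonempty β] {ι : Type*} [Fintype ι] (H : SimpleGraph α) (G : SimpleGraph β)
    (bag : ι → Finset α) (T : SimpleGraph ι) (hT : IsTreeDecomp H bag T)
    (hiso : ∀ X Y : ι, T.Adj X Y → ∃ e : H.induce (↑(bag X) : Set α) ≃g H.induce (↑(bag Y) : Set α),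
      ∀ (v : α) (h1 : v ∈ bag X) (h2 : v ∈ bag Y),
        ((e ⟨v, h1⟩ : (↑(bag Y) : Set α)) : α) = v)
    (δ : ℝ) (hδ : 0 < δ) (hδ1 : δ ≤ 1)
    (hstep : ∀ Y S, S ⊆ bag Y →
      δ ^ eIn H (bag Y) * tden H G S ≤ δ ^ eIn H S * tden H G (bag Y)) :
    δ ^ eIn H Finset.univ ≤ tden H G Finset.univ := by
  classical
  obtain ⟨hTree, hcov, hedge, hpath⟩ := hT
  have hcon := hTree.connected
  obtain ⟨r⟩ := hcon.nonempty
  have hl : 0 ≤ - Real.log δ := by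
    have := Real.log_nonpos hδ.le hδ1; linarith
  have hpos : ∀ Y, 0 < tden H G (bag Y) := by
    intro Y
    have h := hstep Y ∅ (Finset.empty_subset _)
    rw [tden_empty, mul_one] at h
    have h1 : 0 < δ ^ eIn H (bag Y) := by positivity
    have h2 : 0 < δ ^ eIn H ∅ := by positivity
    exact pos_of_mul_pos_right (lt_of_lt_of_le h1 h) h2.le
  have hstep' : ∀ Y S, S ⊆ bag Y → - Real.log (tden H G (bag Y)) + Real.log (tden H G S) ≤
      ((eIn H (bag Y) : ℝ) - eIn H S) * (- Real.log δ) := by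
    intro Y S hS
    have h := hstep Y S hS
    have hSp : 0 < tden H G S := lt_of_lt_of_le (hpos Y) (tden_mono H G hS)
    have h1 := Real.log_le_log (by positivity) h
    rw [Real.log_mul (by positivity) hSp.ne', Real.log_mul (by positivity) (hpos Y).ne',
      Real.log_pow, Real.log_pow] at h1
    linarith
  have main : ∀ j : ℕ, j < Fintype.card ι → ∃ (𝒮 : Finset ι) (q : (α → β) → ℝ),
      𝒮.card = j + 1 ∧
      (∀ X ∈ 𝒮, ∀ Z ∈ 𝒮, ∃ p : T.Walk X Z, p.IsPath ∧ ∀ w ∈ p.support, w ∈ 𝒮) ∧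
      (∀ φ, 0 ≤ q φ) ∧ Dep (𝒮.biUnion bag) q ∧
      (∀ Z ∈ 𝒮, ∀ φ, cond (bag Z) q φ = gden H G (bag Z) φ) ∧
      (Finset.univ.expect fun φ => q φ * Real.log (q φ)) ≤
        (eIn H (𝒮.biUnion bag) : ℝ) * (- Real.log δ) := by
    intro j
    induction j with
    | zero =>
      intro _
      refine ⟨{r}, gden H G (bag r), by simp, ?_, gden_nonneg H G _ (hpos r), ?_, ?_, ?_⟩
      · intro X hX Z hZ
        rw [Finset.mem_singleton] at hX hZ
        subst hX; subst hZ
        exact ⟨SimpleGraph.Walk.nil, by simp, by simp⟩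
      · rw [Finset.singleton_biUnion]; exact dep_gden H G _
      · intro Z hZ φ
        rw [Finset.mem_singleton] at hZ
        subst hZ
        exact cond_self (dep_gden H G _) φ
      · rw [Finset.singleton_biUnion, entropy_gden H G _ (hpos r)]
        have h := hstep' r ∅ (Finset.empty_subset _)
        rw [tden_empty, Real.log_one] at h
        have : 0 ≤ (eIn H ∅ : ℝ) * (- Real.log δ) := by positivity
        linarith
    | succ j ih =>
      intro hj
      obtain ⟨𝒮, q, hcard, hpc, hq0, hqU, hqm, hent⟩ := ih (by omega)
      have hne : 𝒮.Nonempty := Finset.card_pos.1 (by omega)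
      obtain ⟨x, hx⟩ := hne
      obtain ⟨y, hy⟩ : ∃ y, y ∉ 𝒮 := by
        by_contra hc
        push Not at hc
        have : 𝒮 = Finset.univ := Finset.eq_univ_iff_forall.2 hc
        rw [this, Finset.card_univ] at hcard
        omega
      obtain ⟨X, Y, hX, hY, hXY⟩ := exists_boundary T hcon (· ∈ 𝒮) x y hx hy
      have hXU : bag X ⊆ 𝒮.biUnion bag := Finset.subset_biUnion_of_mem bag hX
      have hpathY : ∀ Z ∈ 𝒮, ∃ p : T.Walk Y Z, p.IsPath ∧ X ∈ p.support ∧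
          ∀ w ∈ p.support, w ∈ insert Y 𝒮 := by
        intro Z hZ
        obtain ⟨p, hp, hps⟩ := hpc X hX Z hZ
        refine ⟨SimpleGraph.Walk.cons hXY.symm p, ?_, ?_, ?_⟩
        · rw [SimpleGraph.Walk.cons_isPath_iff]
          exact ⟨hp, fun h => hY (hps _ h)⟩
        · simp
        · intro w hw
          rw [SimpleGraph.Walk.support_cons, List.mem_cons] at hw
          rcases hw with rfl | hw
          · exact Finset.mem_insert_self _ _
          · exact Finset.mem_insert_of_mem (hps w hw)
      have hS : 𝒮.biUnion bag ∩ bag Y = bag X ∩ bag Y := by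
        apply Finset.Subset.antisymm
        · intro v hv
          rw [Finset.mem_inter, Finset.mem_biUnion] at hv
          obtain ⟨⟨Z, hZ, hvZ⟩, hvY⟩ := hv
          obtain ⟨p, hp, hXp, _⟩ := hpathY Z hZ
          exact Finset.mem_inter.2 ⟨hpath Y Z X p hp hXp (Finset.mem_inter.2 ⟨hvY, hvZ⟩), hvY⟩
        · exact Finset.inter_subset_inter_right hXU
      obtain ⟨q', h0, hdep, hold, hnew, hent'⟩ := glue_step H G (𝒮.biUnion bag) (bag X) (bag Y) q
        hq0 hqU hXU hS (hqm X hX) (hpos Y) (hiso X Y hXY)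
      have hU : (insert Y 𝒮).biUnion bag = 𝒮.biUnion bag ∪ bag Y := by
        rw [Finset.biUnion_insert, Finset.union_comm]
      refine ⟨insert Y 𝒮, q', ?_, ?_, h0, ?_, ?_, ?_⟩
      · rw [Finset.card_insert_of_notMem hY, hcard]
      · intro A hA B hB
        rw [Finset.mem_insert] at hA hB
        rcases hA with rfl | hA
        · rcases hB with rfl | hB
          · exact ⟨SimpleGraph.Walk.nil, by simp, by simp⟩
          · obtain ⟨p, hp, _, hps⟩ := hpathY B hB
            exact ⟨p, hp, hps⟩
        · rcases hB with rfl | hB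
          · obtain ⟨p, hp, _, hps⟩ := hpathY A hA
            exact ⟨p.reverse, hp.reverse, fun w hw => hps w (by simpa using hw)⟩
          · obtain ⟨p, hp, hps⟩ := hpc A hA B hB
            exact ⟨p, hp, fun w hw => Finset.mem_insert_of_mem (hps w hw)⟩
      · rw [hU]; exact hdep
      · intro Z hZ φ
        rw [Finset.mem_insert] at hZ
        rcases hZ with rfl | hZ
        · exact hnew φ
        · rw [hold _ (Finset.subset_biUnion_of_mem bag hZ), hqm Z hZ]
      · rw [hU]
        have h1 := hstep' Y (bag X ∩ bag Y) Finset.inter_subset_right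
        have h2 := eIn_super H (𝒮.biUnion bag) (bag Y)
        rw [hS] at h2
        have h3 : (eIn H (𝒮.biUnion bag) : ℝ) + eIn H (bag Y) ≤
          eIn H (𝒮.biUnion bag ∪ bag Y) + eIn H (bag X ∩ bag Y) := by exact_mod_cast h2
        have h4 := mul_le_mul_of_nonneg_right h3 hl
        linarith
  have hcι : 0 < Fintype.card ι := Fintype.card_pos_iff.2 ⟨r⟩
  obtain ⟨𝒮, q, hcard, _, hq0, _, hqm, hent⟩ := main (Fintype.card ι - 1) (by omega)
  have hall : 𝒮 = Finset.univ := by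
    rw [← Finset.card_eq_iff_eq_univ]; omega
  subst hall
  have hU : Finset.univ.biUnion bag = (Finset.univ : Finset α) := by
    rw [Finset.eq_univ_iff_forall]
    intro v
    obtain ⟨X, hX⟩ := hcov v
    exact Finset.mem_biUnion.2 ⟨X, Finset.mem_univ _, hX⟩
  rw [hU] at hent
  have hsup : ∀ φ, q φ ≠ 0 → ind H G Finset.univ φ = 1 := by
    intro φ hφ
    unfold ind
    rw [if_pos]
    intro u _ v _ huv
    obtain ⟨X, hu, hv⟩ := hedge u v huv
    by_contra hc
    apply hφ
    apply eq_zero_of_cond (X := bag X) hq0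
    rw [hqm X (Finset.mem_univ _)]
    unfold gden ind
    rw [if_neg, zero_mul]
    intro hh
    exact hc (hh u hu v hv huv)
  have hq1 : Finset.univ.expect q = 1 := by
    rw [← expect_cond (bag r) q, ← expect_gden H G (bag r) (hpos r)]
    exact Finset.expect_congr rfl fun φ _ => hqm r (Finset.mem_univ _) φ
  have htp : 0 < tden H G Finset.univ := by
    have : ∃ φ, q φ ≠ 0 := by
      by_contra hc
      push Not at hc
      rw [Finset.expect_eq_zero fun φ _ => hc φ] at hq1
      exact zero_ne_one hq1
    obtain ⟨φ, hφ⟩ := this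
    exact Finset.expect_pos' (fun φ _ => ind_nonneg H G _ φ)
      ⟨φ, Finset.mem_univ _, by rw [hsup φ hφ]; norm_num⟩
  have hE := entropy_ge q (ind H G Finset.univ) hq0 hq1 (ind_nonneg H G _) hsup htp
  change - Real.log (tden H G Finset.univ) ≤ _ at hE
  rw [← Real.log_le_log_iff (by positivity) htp, Real.log_pow]
  linarith

end LD

namespace LD

open Finset Matrix in
theorem spectral_sum {β : Type*} [Fintype β] [DecidableEq β] (A : Matrix β β ℝ)
    (hA : A.IsHermitian) :
    ∃ w l : β → ℝ, (∀ i, 0 ≤ w i) ∧ (∑ i, w i = (Fintype.card β : ℝ)) ∧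
      ∀ j : ℕ, ∑ x, ∑ y, (A ^ j) x y = ∑ i, w i * l i ^ j := by
  set U : Matrix β β ℝ := (hA.eigenvectorUnitary : Matrix β β ℝ) with hU
  let w : β → ℝ := fun i => (∑ x, U x i) ^ 2
  let l : β → ℝ := hA.eigenvalues
  have key : ∀ j : ℕ, ∑ x, ∑ y, (A ^ j) x y = ∑ i, w i * l i ^ j := by
    intro j
    have h1 : A ^ j = U * diagonal (fun i => l i ^ j) * Uᵀ := by
      conv_lhs => rw [hA.spectral_theorem]
      rw [← map_pow, diagonal_pow, Unitary.conjStarAlgAut_apply]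
      rfl
    rw [h1]
    have h2 : ∀ x y, (U * diagonal (fun i => l i ^ j) * Uᵀ) x y =
        ∑ i, U x i * l i ^ j * U y i := by
      intro x y
      rw [mul_apply]
      simp [mul_diagonal]
    simp only [h2]
    have h3 : ∀ i, w i * l i ^ j = ∑ x, ∑ y, U x i * l i ^ j * U y i := by
      intro i
      simp only [w]
      rw [sq, Finset.sum_mul_sum, Finset.sum_mul]
      refine Finset.sum_congr rfl fun x _ => ?_
      rw [Finset.sum_mul]
      refine Finset.sum_congr rfl fun y _ => ?_
      ring
    rw [Finset.sum_congr rfl fun i _ => h3 i]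
    rw [Finset.sum_comm]
    conv_rhs => rw [Finset.sum_comm]
    rw [Finset.sum_comm]
    exact Finset.sum_congr rfl fun x _ => Finset.sum_comm
  refine ⟨w, l, fun i => sq_nonneg _, ?_, key⟩
  have h := key 0
  simp only [pow_zero, mul_one] at h
  rw [← h]
  simp [Matrix.one_apply]

theorem young (x b : ℝ) (hx : 0 ≤ x) (hb : 0 ≤ b) (j M : ℕ) (hj : j ≤ M) (hM : 0 < M) :
    x ^ j * b ^ (M - j) ≤ (j / M : ℝ) * x ^ M + ((M - j : ℕ) / M : ℝ) * b ^ M := by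
  have hM' : (M : ℝ) ≠ 0 := by positivity
  have h := Real.geom_mean_le_arith_mean2_weighted (w₁ := (j / M : ℝ)) (w₂ := ((M - j : ℕ) / M : ℝ))
    (p₁ := x ^ M) (p₂ := b ^ M) (by positivity) (by positivity) (by positivity) (by positivity)
    (by rw [← add_div, ← Nat.cast_add, Nat.add_sub_cancel' hj, div_self hM'])
  have e : ∀ (y : ℝ) (i : ℕ), 0 ≤ y → (y ^ M) ^ ((i : ℝ) / M) = y ^ i := by
    intro y i hy
    rw [← Real.rpow_natCast y M, ← Real.rpow_mul hy, mul_div_cancel₀ _ hM', Real.rpow_natCast]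
  rwa [e x j hx, e b (M - j) hb] at h

/-- The power mean inequality for walk counts. -/
theorem walk_bound {β : Type*} [Fintype β] [DecidableEq β] [Nonempty β] (A : Matrix β β ℝ)
    (hA : A.IsHermitian) (M : ℕ) (hM : Even M) (hM0 : 0 < M)
    (h1 : 0 < ∑ x, ∑ y, A x y) :
    ∃ B : ℝ, 0 < B ∧ (∑ x, ∑ y, (A ^ M) x y = Fintype.card β * B ^ M) ∧
      (∀ j ≤ M, ∑ x, ∑ y, (A ^ j) x y ≤ Fintype.card β * B ^ j) := by
  obtain ⟨w, l, hw, hsum, key⟩ := spectral_sum A hA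
  have hn : (0 : ℝ) < Fintype.card β := by exact_mod_cast Fintype.card_pos
  set n : ℝ := (Fintype.card β : ℝ) with hnd
  have hw1 : ∑ i, w i / n = 1 := by
    rw [← Finset.sum_div, hsum, div_self hn.ne']
  have hJ := Real.pow_arith_mean_le_arith_mean_pow_of_even Finset.univ (fun i => w i / n) l
    (fun i _ => div_nonneg (hw i) hn.le) hw1 hM
  have e1 : ∀ j : ℕ, ∑ i, w i / n * l i ^ j = (∑ x, ∑ y, (A ^ j) x y) / n := by
    intro j
    rw [key j, Finset.sum_div]
    exact Finset.sum_congr rfl fun i _ => by ring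
  have e2 := e1 1
  simp only [pow_one] at e2
  rw [e2, e1] at hJ
  set sM := ∑ x, ∑ y, (A ^ M) x y with hsM
  have hsMpos : 0 < sM / n := lt_of_lt_of_le (by positivity) hJ
  have hM' : (M : ℝ) ≠ 0 := by positivity
  set B := (sM / n) ^ ((M : ℝ)⁻¹) with hB
  have hBpos : 0 < B := Real.rpow_pos_of_pos hsMpos _
  have hBM : B ^ M = sM / n := by
    rw [hB]
    exact Real.rpow_inv_natCast_pow hsMpos.le hM0.ne'
  refine ⟨B, hBpos, by rw [hBM]; field_simp, ?_⟩
  intro j hj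
  have h2 : (∑ x, ∑ y, (A ^ j) x y) / n * B ^ (M - j) ≤ B ^ M := by
    rw [← e1 j, Finset.sum_mul]
    calc ∑ i, w i / n * l i ^ j * B ^ (M - j)
        ≤ ∑ i, (w i / n) * ((j / M : ℝ) * l i ^ M + ((M - j : ℕ) / M : ℝ) * B ^ M) := by
          refine Finset.sum_le_sum fun i _ => ?_
          rw [mul_assoc]
          refine mul_le_mul_of_nonneg_left ?_ (div_nonneg (hw i) hn.le)
          have hy := young |l i| B (abs_nonneg _) hBpos.le j M hj hM0
          rw [hM.pow_abs] at hy
          refine le_trans (mul_le_mul_of_nonneg_right ?_ (by positivity)) hy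
          rw [← abs_pow]
          exact le_abs_self _
      _ = (j / M : ℝ) * (∑ i, w i / n * l i ^ M) + ((M - j : ℕ) / M : ℝ) * B ^ M * ∑ i, w i / n := by
          rw [Finset.mul_sum, Finset.mul_sum, ← Finset.sum_add_distrib]
          exact Finset.sum_congr rfl fun i _ => by ring
      _ = B ^ M := by
          rw [e1, ← hsM, ← hBM, hw1, Nat.cast_sub hj]
          field_simp
          ring
  have h3 : B ^ M = B ^ j * B ^ (M - j) := by rw [← pow_add, Nat.add_sub_cancel' hj]
  rw [h3] at h2
  have h4 := le_of_mul_le_mul_right h2 (by positivity)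
  rw [div_le_iff₀ hn] at h4
  linarith

theorem sum_fin_succ {β : Type*} [Fintype β] (r : ℕ) (F : (Fin (r + 1) → β) → ℝ) :
    ∑ θ : Fin (r + 1) → β, F θ = ∑ θ : Fin r → β, ∑ x : β, F (Fin.cons x θ) := by
  rw [← (Fin.consEquiv (fun _ => β)).sum_comp, Fintype.sum_prod_type, Finset.sum_comm]
  rfl

theorem path_sum_bound {β : Type*} [Fintype β] [DecidableEq β] (A : Matrix β β ℝ)
    (M : ℕ) (B n : ℝ) (hn : 0 ≤ n) (hB : 0 ≤ B)
    (hbd : ∀ j ≤ M, ∑ x, ∑ y, (A ^ j) x y ≤ n * B ^ j) (hA0 : ∀ x y, 0 ≤ A x y) (r : ℕ) :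
    ∀ (e : Fin r → Prop) [DecidablePred e] (j : ℕ), j + (∑ i, if e i then 1 else 0) ≤ M →
    ∑ θ : Fin (r + 1) → β, (∑ z, (A ^ j) z (θ 0)) *
      ∏ i : Fin r, (if e i then A (θ i.castSucc) (θ i.succ) else 1) ≤
      n * B ^ j * ∏ i, (if e i then B else n) := by
  induction r with
  | zero =>
    intro e _ j hj
    rw [sum_fin_succ]
    simp only [Finset.univ_eq_empty, Finset.prod_empty, mul_one, Fin.cons_zero]
    rw [Finset.sum_comm, Finset.sum_comm]
    simp only [Fintype.sum_unique]
    rw [Finset.sum_comm]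
    exact hbd j (by omega)
  | succ r ih =>
    intro e _ j hj
    rw [sum_fin_succ]
    simp only [Fin.prod_univ_succ, Fin.cons_zero, Fin.castSucc_zero, Fin.cons_succ,
      ← Fin.succ_castSucc]
    rw [Fin.sum_univ_succ] at hj
    by_cases h0 : e 0
    · simp only [h0, if_true] at hj ⊢
      have h := ih (fun i => e i.succ) (j + 1) (by omega)
      calc _ = ∑ θ : Fin (r + 1) → β, (∑ z, (A ^ (j + 1)) z (θ 0)) *
              ∏ i : Fin r, (if e i.succ then A (θ i.castSucc) (θ i.succ) else 1) := by
            refine Finset.sum_congr rfl fun θ _ => ?_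
            rw [Finset.sum_congr rfl fun x _ => (mul_assoc _ _ _).symm, ← Finset.sum_mul]
            congr 1
            simp only [pow_succ, Matrix.mul_apply, Finset.sum_mul]
            rw [Finset.sum_comm]
        _ ≤ _ := h
        _ = _ := by rw [pow_succ]; ring
    · simp only [h0, if_false, zero_add, one_mul] at hj ⊢
      have h := ih (fun i => e i.succ) 0 (by omega)
      have h1 := hbd j (by omega)
      have hz : ∀ θ : Fin (r + 1) → β, (∑ z, (A ^ 0) z (θ 0)) = 1 := by
        intro θ; simp [Matrix.one_apply]
      simp only [hz] at h
      simp only [one_mul, pow_zero, mul_one] at h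
      have hP : 0 ≤ ∏ i : Fin r, (if e i.succ then B else n) :=
        Finset.prod_nonneg fun i _ => by split_ifs <;> assumption
      have hP2 : 0 ≤ ∑ θ : Fin (r + 1) → β,
          ∏ i : Fin r, (if e i.succ then A (θ i.castSucc) (θ i.succ) else 1) :=
        Finset.sum_nonneg fun θ _ => Finset.prod_nonneg fun i _ => by
          split_ifs
          · exact hA0 _ _
          · exact zero_le_one
      calc _ = (∑ x, ∑ y, (A ^ j) x y) * ∑ θ : Fin (r + 1) → β,
              ∏ i : Fin r, (if e i.succ then A (θ i.castSucc) (θ i.succ) else 1) := by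
            rw [Finset.mul_sum]
            refine Finset.sum_congr rfl fun θ _ => ?_
            rw [← Finset.sum_mul, Finset.sum_comm]
        _ ≤ (n * B ^ j) * (n * ∏ i : Fin r, (if e i.succ then B else n)) := by
            exact mul_le_mul h1 h hP2 (by positivity)
        _ = _ := by ring

theorem cycle_sum {β : Type*} [Fintype β] [DecidableEq β] (A : Matrix β β ℝ) (r : ℕ) :
    ∀ F : β → β → ℝ, ∑ θ : Fin (r + 1) → β,
      (∏ i : Fin r, A (θ i.castSucc) (θ i.succ)) * F (θ 0) (θ (Fin.last r)) =
      ∑ x, ∑ y, (A ^ r) x y * F x y := by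
  induction r with
  | zero =>
    intro F
    rw [sum_fin_succ]
    simp [Matrix.one_apply]
  | succ r ih =>
    intro F
    rw [sum_fin_succ]
    simp only [Fin.prod_univ_succ, Fin.cons_zero, Fin.castSucc_zero, Fin.cons_succ,
      ← Fin.succ_castSucc, ← Fin.succ_last]
    have h := ih (fun z y => ∑ x, A x z * F x y)
    calc _ = ∑ θ : Fin (r + 1) → β, (∏ i : Fin r, A (θ i.castSucc) (θ i.succ)) *
          ∑ x, A x (θ 0) * F x (θ (Fin.last r)) := by
            refine Finset.sum_congr rfl fun θ _ => ?_
            rw [Finset.mul_sum]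
            exact Finset.sum_congr rfl fun x _ => by ring
      _ = _ := h
      _ = _ := by
        simp only [pow_succ', Matrix.mul_apply, Finset.sum_mul, Finset.mul_sum]
        have : ∀ z : β, ∑ y, ∑ x, (A ^ r) z y * (A x z * F x y) =
          ∑ x, ∑ y, A x z * (A ^ r) z y * F x y := by
          intro z
          rw [Finset.sum_comm]
          exact Finset.sum_congr rfl fun x _ => Finset.sum_congr rfl fun y _ => by ring
        rw [Finset.sum_congr rfl fun z _ => this z, Finset.sum_comm]
        exact Finset.sum_congr rfl fun x _ => Finset.sum_comm

end LD

namespace LD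

open Matrix in
theorem copos {β : Type*} [Fintype β] [DecidableEq β] (N : Matrix β β ℝ) (C : ℝ)
    (hdiag : ∀ x, N x x ≤ 0)
    (h01 : ∀ f : β → ℝ, (∀ x, f x = 0 ∨ f x = 1) → -C ≤ f ⬝ᵥ (N *ᵥ f)) (s : Finset β) :
    ∀ f : β → ℝ, (∀ x, 0 ≤ f x ∧ f x ≤ 1) → (∀ x ∉ s, f x = 0 ∨ f x = 1) →
      -C ≤ f ⬝ᵥ (N *ᵥ f) := by
  induction s using Finset.induction_on with
  | empty => intro f _ h; exact h01 f fun x => h x (by simp)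
  | insert a s ha ih =>
    intro f hf hs
    set t := f a with ht
    have h0 := ih (Function.update f a 0) (fun x => by
      by_cases hx : x = a
      · subst hx; simp
      · simp [Function.update_of_ne hx, hf x]) (fun x hx => by
      by_cases hxa : x = a
      · subst hxa; simp
      · rw [Function.update_of_ne hxa]; exact hs x (by simp [hxa, hx]))
    have h1 := ih (Function.update f a 1) (fun x => by
      by_cases hx : x = a
      · subst hx; simp
      · simp [Function.update_of_ne hx, hf x]) (fun x hx => by
      by_cases hxa : x = a
      · subst hxa; simp
      · rw [Function.update_of_ne hxa]; exact hs x (by simp [hxa, hx]))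
    set g := Function.update f a 0 with hg
    set D : β → ℝ := Pi.single a 1 with hD
    have e1 : Function.update f a 1 = g + D := by
      funext x
      by_cases hx : x = a
      · subst hx; simp [hg, hD]
      · simp [hg, hD, hx]
    have e2 : f = g + t • D := by
      funext x
      by_cases hx : x = a
      · subst hx; simp [hg, hD, ht]
      · simp [hg, hD, hx]
    have hQ : D ⬝ᵥ (N *ᵥ D) = N a a := by simp [hD]
    rw [e1] at h1
    rw [e2]
    simp only [mulVec_add, mulVec_smul, dotProduct_add, add_dotProduct, dotProduct_smul,
      smul_dotProduct, smul_eq_mul, hQ] at h1 ⊢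
    have ht0 := (hf a).1
    have ht1 := (hf a).2
    rw [← ht] at ht0 ht1
    have hd := hdiag a
    nlinarith [mul_nonneg (mul_nonneg ht0 (sub_nonneg.2 ht1)) (neg_nonneg.2 hd),
      mul_le_mul_of_nonneg_left h1 ht0, mul_le_mul_of_nonneg_left h0 (sub_nonneg.2 ht1)]

/-- the real adjacency matrix -/
noncomputable def adj {β : Type*} (G : SimpleGraph β) : Matrix β β ℝ := by
  classical
  exact fun x y => if G.Adj x y then 1 else 0

theorem adj_nonneg {β : Type*} (G : SimpleGraph β) (x y : β) : 0 ≤ adj G x y := by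
  unfold adj; split_ifs <;> norm_num

theorem adj_le_one {β : Type*} (G : SimpleGraph β) (x y : β) : adj G x y ≤ 1 := by
  unfold adj; split_ifs <;> norm_num

theorem adj_symm {β : Type*} (G : SimpleGraph β) (x y : β) : adj G x y = adj G y x := by
  unfold adj
  by_cases h : G.Adj x y
  · simp [h, h.symm]
  · have h' : ¬ G.Adj y x := fun h' => h h'.symm
    simp [h, h']

theorem adj_herm {β : Type*} (G : SimpleGraph β) : (adj G).IsHermitian := by
  ext x y
  simp [Matrix.conjTranspose_apply, adj_symm G y x]

theorem edges_in {β : Type*} [Fintype β] (G : SimpleGraph β) (X : Finset β) :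
    2 * (Nat.card {e : Sym2 β // e ∈ G.edgeSet ∧ ∀ v ∈ e, v ∈ X} : ℝ) =
      ∑ x ∈ X, ∑ y ∈ X, adj G x y := by
  classical
  let G' : SimpleGraph β :=
    { Adj := fun x y => G.Adj x y ∧ x ∈ X ∧ y ∈ X
      symm := ⟨fun x y h => ⟨h.1.symm, h.2.2, h.2.1⟩⟩
      loopless := ⟨fun x h => G.loopless.irrefl x h.1⟩ }
  have h1 : Nat.card {e : Sym2 β // e ∈ G.edgeSet ∧ ∀ v ∈ e, v ∈ X} = G'.edgeFinset.card := by
    rw [Nat.card_eq_fintype_card, Fintype.card_subtype]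
    congr 1
    ext e
    induction e using Sym2.ind with
    | _ x y =>
      simp [G', SimpleGraph.mem_edgeFinset]
  have h2 := G'.sum_degrees_eq_twice_card_edges
  rw [h1]
  have h3 : ((∑ v, G'.degree v : ℕ) : ℝ) = 2 * (G'.edgeFinset.card : ℝ) := by
    rw [h2]; push_cast; ring
  rw [← h3]
  push_cast
  have h4 : ∀ x, (G'.degree x : ℝ) = if x ∈ X then ∑ y ∈ X, adj G x y else 0 := by
    intro x
    rw [← SimpleGraph.card_neighborFinset_eq_degree, SimpleGraph.neighborFinset_eq_filter]
    unfold adj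
    rw [Finset.sum_boole]
    split_ifs with hx
    · congr 2
      ext y
      simp [G', hx, and_comm]
    · simp [G', hx]
  rw [Finset.sum_congr rfl fun x _ => h4 x, Finset.sum_ite_mem, Finset.univ_inter]

theorem local_dense {β : Type*} [Fintype β] (G : SimpleGraph β) (ρ d : ℝ)
    (hd : 0 ≤ d) (hd1 : d ≤ 1) (hG : LocallyDense G ρ d) (f : β → ℝ)
    (hf : ∀ x, 0 ≤ f x ∧ f x ≤ 1) :
    d * (∑ x, f x) ^ 2 - ρ ^ 2 * (Fintype.card β : ℝ) ^ 2 ≤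
      ∑ x, ∑ y, f x * adj G x y * f y := by
  classical
  let N : Matrix β β ℝ := fun x y => adj G x y - d
  have hN : ∀ f : β → ℝ, dotProduct f (N.mulVec f) =
      (∑ x, ∑ y, f x * adj G x y * f y) - d * (∑ x, f x) ^ 2 := by
    intro f
    simp only [dotProduct, Matrix.mulVec, N]
    rw [sq, Finset.sum_mul_sum, Finset.mul_sum, ← Finset.sum_sub_distrib]
    refine Finset.sum_congr rfl fun x _ => ?_
    rw [Finset.mul_sum, Finset.mul_sum, ← Finset.sum_sub_distrib]
    exact Finset.sum_congr rfl fun y _ => by ring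
  have h := copos N (ρ ^ 2 * (Fintype.card β : ℝ) ^ 2) (fun x => by simp [N, adj, hd]) (by
    intro f h01
    rw [hN]
    obtain ⟨X, hX⟩ : ∃ X : Finset β, ∀ x, x ∈ X ↔ f x = 1 :=
      ⟨Finset.univ.filter fun x => f x = 1, by simp⟩
    have hfX : ∀ x, f x = if x ∈ X then 1 else 0 := by
      intro x
      rcases h01 x with h | h <;> simp [hX, h]
    have e1 : ∑ x, f x = X.card := by
      rw [Finset.sum_congr rfl fun x _ => hfX x]; simp
    have e2 : ∑ x, ∑ y, f x * adj G x y * f y = ∑ x ∈ X, ∑ y ∈ X, adj G x y := by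
      simp only [hfX]
      simp [Finset.sum_ite_mem]
    rw [e1, e2, ← edges_in]
    by_cases hc : ρ * (Fintype.card β : ℝ) ≤ (X.card : ℝ)
    · have := hG X hc
      have h2 : 0 ≤ ρ ^ 2 * (Fintype.card β : ℝ) ^ 2 := by positivity
      linarith
    · push Not at hc
      have h3 : (X.card : ℝ) ^ 2 ≤ (ρ * (Fintype.card β : ℝ)) ^ 2 :=
        pow_le_pow_left₀ (Nat.cast_nonneg _) hc.le 2
      have h4 : (0 : ℝ) ≤ (Nat.card {e : Sym2 β // e ∈ G.edgeSet ∧ ∀ v ∈ e, v ∈ X} : ℝ) :=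
        Nat.cast_nonneg _
      have h5 : d * (X.card : ℝ) ^ 2 ≤ 1 * (X.card : ℝ) ^ 2 :=
        mul_le_mul_of_nonneg_right hd1 (sq_nonneg _)
      rw [mul_pow] at h3
      linarith) Finset.univ f hf (by simp)
  rw [hN] at h
  linarith

end LD

namespace LD

theorem adj_pow_le {β : Type*} [Fintype β] [DecidableEq β] (G : SimpleGraph β) (m : ℕ) :
    ∀ x y, 0 ≤ (adj G ^ (m + 1)) x y ∧ (adj G ^ (m + 1)) x y ≤ (Fintype.card β : ℝ) ^ m := by
  induction m with
  | zero => intro x y; simpa using ⟨adj_nonneg G x y, adj_le_one G x y⟩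
  | succ m ih =>
    intro x y
    rw [pow_succ, Matrix.mul_apply]
    refine ⟨Finset.sum_nonneg fun z _ => mul_nonneg (ih x z).1 (adj_nonneg G z y), ?_⟩
    calc _ ≤ ∑ _z : β, (Fintype.card β : ℝ) ^ m := by
          refine Finset.sum_le_sum fun z _ => ?_
          have := mul_le_mul (ih x z).2 (adj_le_one G z y) (adj_nonneg G z y) (by positivity)
          linarith
      _ = _ := by simp [pow_succ, mul_comm]

theorem pow_symm {β : Type*} [Fintype β] [DecidableEq β] (G : SimpleGraph β) (m : ℕ) (x y : β) :
    (adj G ^ m) x y = (adj G ^ m) y x := by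
  have h := ((adj_herm G).pow m).apply y x
  simpa using h

theorem sq_sum_pow {β : Type*} [Fintype β] [DecidableEq β] (G : SimpleGraph β) (m : ℕ) :
    ∑ x, ∑ y, (adj G ^ (m + m)) x y = ∑ v, (∑ x, (adj G ^ m) v x) ^ 2 := by
  simp only [pow_add, Matrix.mul_apply, sq, Finset.sum_mul_sum]
  rw [Finset.sum_congr rfl fun x _ => Finset.sum_comm, Finset.sum_comm]
  refine Finset.sum_congr rfl fun v _ => Finset.sum_congr rfl fun x _ =>
    Finset.sum_congr rfl fun y _ => ?_
  rw [pow_symm G m x v]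

theorem even_cycle {β : Type*} [Fintype β] [DecidableEq β] (G : SimpleGraph β) (m r : ℕ)
    (h : r + 1 = m + m) :
    ∑ x, ∑ y, (adj G ^ (m + m)) x y ≤
      (Fintype.card β : ℝ) * ∑ x, ∑ y, (adj G ^ r) x y * adj G y x := by
  have h1 : ∑ x, ∑ y, (adj G ^ r) x y * adj G y x = ∑ v, ∑ x, ((adj G ^ m) v x) ^ 2 := by
    have : ∀ x, ∑ y, (adj G ^ r) x y * adj G y x = (adj G ^ (m + m)) x x := by
      intro x
      rw [← h, pow_succ, Matrix.mul_apply]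
    rw [Finset.sum_congr rfl fun x _ => this x]
    refine Finset.sum_congr rfl fun v _ => ?_
    rw [pow_add, Matrix.mul_apply]
    refine Finset.sum_congr rfl fun x _ => ?_
    rw [pow_symm G m x v, sq]
  rw [sq_sum_pow, h1, Finset.mul_sum]
  refine Finset.sum_le_sum fun v _ => ?_
  have := sq_sum_le_card_mul_sum_sq (s := Finset.univ) (f := fun x => (adj G ^ m) v x)
  rwa [Finset.card_univ] at this

theorem odd_cycle {β : Type*} [Fintype β] [DecidableEq β] [Nonempty β] (G : SimpleGraph β) (m r : ℕ)
    (hr : r = (m + 1) + (m + 1)) (ρ d : ℝ)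
    (hd : 0 ≤ d) (hd1 : d ≤ 1) (hG : LocallyDense G ρ d) :
    d * ∑ x, ∑ y, (adj G ^ r) x y - ρ ^ 2 * (Fintype.card β : ℝ) ^ (r + 1) ≤
      ∑ x, ∑ y, (adj G ^ r) x y * adj G y x := by
  have hn : (0 : ℝ) < Fintype.card β := by exact_mod_cast Fintype.card_pos
  set n : ℝ := (Fintype.card β : ℝ) with hnd
  set P := adj G ^ (m + 1) with hP
  have h1 : ∑ x, ∑ y, (adj G ^ r) x y * adj G y x =
      ∑ v, ∑ x, ∑ y, P v x * adj G x y * P v y := by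
    have e1 : ∑ x, ∑ y, (adj G ^ r) x y * adj G y x = Matrix.trace (P * P * adj G) := by
      rw [hr, pow_add, ← hP]
      simp only [Matrix.trace, Matrix.diag, Matrix.mul_apply (M := P * P)]
    have e2 : Matrix.trace (P * P * adj G) = Matrix.trace (P * adj G * P) := by
      rw [mul_assoc, Matrix.trace_mul_comm]
    rw [e1, e2]
    simp only [Matrix.trace, Matrix.diag, Matrix.mul_apply, Finset.sum_mul]
    refine Finset.sum_congr rfl fun v _ => ?_
    rw [Finset.sum_comm]
    refine Finset.sum_congr rfl fun x _ => Finset.sum_congr rfl fun y _ => ?_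
    rw [hP, pow_symm G (m + 1) y v]
  have h2 : ∀ v, d * (∑ x, P v x) ^ 2 - ρ ^ 2 * n ^ r ≤ ∑ x, ∑ y, P v x * adj G x y * P v y := by
    intro v
    have hnm : 0 < n ^ m := by positivity
    have h := local_dense G ρ d hd hd1 hG (fun x => P v x / n ^ m) (fun x =>
      ⟨div_nonneg (adj_pow_le G m v x).1 hnm.le, (div_le_one hnm).2 (adj_pow_le G m v x).2⟩)
    have e3 : ∑ x, ∑ y, P v x / n ^ m * adj G x y * (P v y / n ^ m) =
        (∑ x, ∑ y, P v x * adj G x y * P v y) / (n ^ m) ^ 2 := by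
      simp only [Finset.sum_div]
      refine Finset.sum_congr rfl fun x _ => Finset.sum_congr rfl fun y _ => ?_
      field_simp
    rw [e3, ← Finset.sum_div, le_div_iff₀ (by positivity), ← hnd] at h
    have e4 : (d * ((∑ x, P v x) / n ^ m) ^ 2 - ρ ^ 2 * n ^ 2) * (n ^ m) ^ 2 =
        d * (∑ x, P v x) ^ 2 - ρ ^ 2 * n ^ r := by
      rw [hr]
      field_simp
      ring
    rwa [e4] at h
  rw [h1]
  have h3 := Finset.sum_le_sum (s := Finset.univ) fun v _ => h2 v
  rw [Finset.sum_sub_distrib, ← Finset.mul_sum, Finset.sum_const, Finset.card_univ, ← sq_sum_pow,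
    nsmul_eq_mul, ← hnd, ← hr] at h3
  calc _ = _ := by rw [pow_succ]; ring
    _ ≤ _ := h3

theorem core {β : Type*} [Fintype β] [DecidableEq β] [Nonempty β] (G : SimpleGraph β) (r : ℕ)
    (hr2 : 2 ≤ r) (ρ d ε : ℝ) (hρ1 : ρ ≤ 1)
    (hd : 0 < d) (hd1 : d ≤ 1) (hε : 0 ≤ ε) (hεd : ε < d) (hρε : ρ ^ 2 ≤ ε * d ^ r)
    (hG : LocallyDense G ρ d) (e : Fin r → Prop) [DecidablePred e] :
    (d - ε) ^ (r + 1) * (Finset.univ.expect fun θ : Fin (r + 1) → β =>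
      ∏ i : Fin r, (if e i then adj G (θ i.castSucc) (θ i.succ) else 1)) ≤
    (d - ε) ^ (∑ i, if e i then 1 else 0) * (Finset.univ.expect fun θ : Fin (r + 1) → β =>
      (∏ i : Fin r, adj G (θ i.castSucc) (θ i.succ)) * adj G (θ (Fin.last r)) (θ 0)) := by
  have hn : (0 : ℝ) < Fintype.card β := by exact_mod_cast Fintype.card_pos
  set n : ℝ := (Fintype.card β : ℝ) with hnd
  set δ := d - ε with hδ
  have hδ0 : 0 < δ := by linarith
  set A := adj G with hA
  -- edge density
  have hs1 : d * n ^ 2 ≤ ∑ x, ∑ y, A x y := by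
    have h := hG Finset.univ (by
      rw [Finset.card_univ, ← hnd]; nlinarith)
    have h2 := edges_in G Finset.univ
    rw [Finset.card_univ, ← hnd] at h
    rw [hA, ← h2]
    linarith
  have hs1pos : 0 < ∑ x, ∑ y, A x y := lt_of_lt_of_le (by positivity) hs1
  obtain ⟨M, hMe, hrM, hMr, hT⟩ : ∃ M, Even M ∧ r ≤ M ∧ M ≤ r + 1 ∧
      ∀ B : ℝ, 0 < B → d * n ≤ B → ∑ x, ∑ y, (A ^ M) x y = n * B ^ M →
        (δ * n) ^ (r + 1 - M) * B ^ M ≤ ∑ x, ∑ y, (A ^ r) x y * A y x := by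
    rcases Nat.even_or_odd r with hev | hodd
    · obtain ⟨m, hm⟩ := hev
      obtain ⟨m', rfl⟩ : ∃ m', m = m' + 1 := ⟨m - 1, by omega⟩
      refine ⟨r, ⟨_, hm⟩, le_rfl, by omega, ?_⟩
      intro B hB hdB hsB
      have h := odd_cycle G m' r hm ρ d hd.le hd1 hG
      rw [← hA, hsB, ← hnd] at h
      have h1 : r + 1 - r = 1 := by omega
      rw [h1, pow_one]
      have h2 : ρ ^ 2 * n ^ (r + 1) ≤ ε * (n * B ^ r) := by
        calc ρ ^ 2 * n ^ (r + 1) ≤ (ε * d ^ r) * n ^ (r + 1) :=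
              mul_le_mul_of_nonneg_right hρε (by positivity)
          _ = ε * (n * (d * n) ^ r) := by ring
          _ ≤ ε * (n * B ^ r) := by gcongr
      calc δ * n * B ^ r = d * (n * B ^ r) - ε * (n * B ^ r) := by rw [hδ]; ring
        _ ≤ _ := by linarith
    · obtain ⟨m, hm⟩ := hodd
      refine ⟨r + 1, ⟨m + 1, by omega⟩, by omega, le_rfl, ?_⟩
      intro B hB hdB hsB
      have h := even_cycle G (m + 1) r (by omega)
      have h1 : m + 1 + (m + 1) = r + 1 := by omega
      rw [h1, ← hA, hsB, ← hnd] at h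
      rw [Nat.sub_self, pow_zero, one_mul]
      exact le_of_mul_le_mul_left h hn
  obtain ⟨B, hB, hBM, hBj⟩ := walk_bound A (adj_herm G) M hMe (by omega) hs1pos
  rw [← hnd] at hBM
  have hdB : d * n ≤ B := by
    have h := hBj 1 (by omega)
    rw [pow_one, pow_one, ← hnd] at h
    have h2 : n * (d * n) ≤ n * B := by nlinarith
    exact le_of_mul_le_mul_left h2 hn
  have hT' := hT B hB hdB hBM
  set t := (∑ i, if e i then 1 else 0) with ht
  clear_value t
  have htr : t ≤ r := by
    rw [ht]
    calc _ ≤ ∑ _i : Fin r, 1 := Finset.sum_le_sum fun i _ => by split_ifs <;> omega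
      _ = r := by simp
  have hP := path_sum_bound A M B n hn.le hB.le hBj (adj_nonneg G) r e 0 (by rw [← ht]; omega)
  have hz : ∀ θ : Fin (r + 1) → β, (∑ z, (A ^ 0) z (θ 0)) = 1 := by
    intro θ; simp [Matrix.one_apply]
  simp only [hz] at hP
  simp only [one_mul, pow_zero, mul_one] at hP
  have hprod : ∏ i, (if e i then B else n) = B ^ t * n ^ (r - t) := by
    rw [Finset.prod_ite, Finset.prod_const, Finset.prod_const]
    have e1 : (Finset.univ.filter fun i => e i).card = t := by
      rw [ht, Finset.card_filter]
    have e2 : (Finset.univ.filter fun i => ¬ e i).card = r - t := by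
      have := Finset.card_filter_add_card_filter_not (s := (Finset.univ : Finset (Fin r))) e
      rw [Finset.card_univ, Fintype.card_fin] at this
      have e3 : (Finset.univ.filter e).card = t := e1
      rw [e3] at this
      exact Nat.eq_sub_of_add_eq' this
    rw [e1, e2]
  rw [hprod] at hP
  have hC := cycle_sum A r (fun x y => A y x)
  rw [Fintype.expect_eq_sum_div_card, Fintype.expect_eq_sum_div_card, ← mul_div_assoc,
    ← mul_div_assoc]
  refine div_le_div_of_nonneg_right ?_ (Nat.cast_nonneg _)
  rw [hC]
  calc _ ≤ δ ^ (r + 1) * (n * (B ^ t * n ^ (r - t))) :=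
        mul_le_mul_of_nonneg_left hP (by positivity)
    _ = δ ^ t * ((δ * n) ^ (r + 1 - M) * ((δ * n) ^ (M - t) * B ^ t)) := by
        have e1 : r + 1 = t + (r + 1 - M) + (M - t) := by omega
        have e2 : n * (B ^ t * n ^ (r - t)) = B ^ t * n ^ ((r + 1 - M) + (M - t)) := by
          have : (r + 1 - M) + (M - t) = (r - t) + 1 := by omega
          rw [this, pow_succ]; ring
        have e3 : δ ^ (r + 1) = δ ^ t * δ ^ (r + 1 - M) * δ ^ (M - t) := by
          rw [← pow_add, ← pow_add]
          congr 1
        rw [e2, e3, pow_add n, mul_pow, mul_pow]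
        ring
    _ ≤ δ ^ t * ((δ * n) ^ (r + 1 - M) * (B ^ (M - t) * B ^ t)) := by
        have : δ * n ≤ B := le_trans (mul_le_mul_of_nonneg_right (by linarith) hn.le) hdB
        gcongr
    _ = δ ^ t * ((δ * n) ^ (r + 1 - M) * B ^ M) := by
        rw [← pow_add, Nat.sub_add_cancel (by omega)]
    _ ≤ _ := mul_le_mul_of_nonneg_left hT' (by positivity)

end LD

namespace LD

theorem exists_param {α : Type*} [DecidableEq α] (H : SimpleGraph α) (r : ℕ) (hr : 2 ≤ r)
    (Y : Finset α) (f : H.induce (↑Y : Set α) ≃g SimpleGraph.cycleGraph (r + 1)) (y : α)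
    (hy : y ∈ Y) :
    ∃ s : Fin (r + 1) → α, Function.Injective s ∧ (∀ i, s i ∈ Y) ∧ (∀ v ∈ Y, ∃ i, s i = v) ∧
      (∀ i j, H.Adj (s i) (s j) ↔ (j = i + 1 ∨ i = j + 1)) ∧ s 0 = y := by
  obtain ⟨r, rfl⟩ : ∃ r', r = r' + 1 := ⟨r - 1, by omega⟩
  let c : Fin (r + 1 + 1) := f ⟨y, hy⟩
  refine ⟨fun i => (f.symm (i + c)).1, ?_, fun i => (f.symm (i + c)).2, ?_, ?_, ?_⟩
  · intro i j h
    have h1 := f.symm.injective (Subtype.ext h)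
    exact add_right_cancel h1
  · intro v hv
    refine ⟨f ⟨v, hv⟩ - c, ?_⟩
    simp
  · intro i j
    have h1 : H.Adj (f.symm (i + c)).1 (f.symm (j + c)).1 ↔
        (SimpleGraph.cycleGraph (r + 1 + 1)).Adj (i + c) (j + c) :=
      f.symm.map_rel_iff (a := i + c) (b := j + c)
    rw [h1, SimpleGraph.cycleGraph_adj, add_sub_add_right_eq_sub, add_sub_add_right_eq_sub,
      sub_eq_iff_eq_add', sub_eq_iff_eq_add', or_comm]
  · simp [c]

theorem two_ne {r : ℕ} (hr : 2 ≤ r) (a : Fin (r + 1)) : a + 1 + 1 ≠ a := by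
  obtain ⟨r, rfl⟩ : ∃ r', r = r' + 2 := ⟨r - 2, by omega⟩
  intro h
  rw [add_assoc a 1 1, add_eq_left] at h
  rw [Fin.ext_iff, Fin.val_add] at h
  simp at h
  rw [Nat.mod_eq_of_lt (by omega)] at h
  omega

section
variable {α β : Type*} [Fintype α] [DecidableEq α] [Fintype β]

theorem eIn_param (H : SimpleGraph α) (r : ℕ) (hr : 2 ≤ r) (Y S : Finset α) (hS : S ⊆ Y)
    (s : Fin (r + 1) → α) (hinj : Function.Injective s) (hsurj : ∀ v ∈ Y, ∃ i, s i = v)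
    (hadj : ∀ i j, H.Adj (s i) (s j) ↔ (j = i + 1 ∨ i = j + 1)) :
    eIn H S = ∑ i, if (s i ∈ S ∧ s (i + 1) ∈ S) then 1 else 0 := by
  classical
  rw [← Finset.card_filter, ← Set.ncard_coe_finset]
  rw [← Set.ncard_image_of_injective (f := fun i => s(s i, s (i + 1)))]
  · unfold eIn
    congr 1
    ext e
    simp only [Set.mem_setOf_eq, Set.mem_image, Finset.coe_filter, Finset.mem_univ, true_and]
    constructor
    · induction e using Sym2.ind with
      | _ x y =>
        rintro ⟨h1, h2⟩
        have hx := h2 x (by simp)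
        have hy := h2 y (by simp)
        obtain ⟨i, rfl⟩ := hsurj x (hS hx)
        obtain ⟨j, rfl⟩ := hsurj y (hS hy)
        rw [SimpleGraph.mem_edgeSet, hadj] at h1
        rcases h1 with rfl | rfl
        · exact ⟨i, ⟨hx, hy⟩, rfl⟩
        · exact ⟨j, ⟨hy, hx⟩, Sym2.eq_swap⟩
    · rintro ⟨i, ⟨h1, h2⟩, rfl⟩
      refine ⟨?_, ?_⟩
      · rw [SimpleGraph.mem_edgeSet, hadj]; exact Or.inl rfl
      · intro v hv
        rw [Sym2.mem_iff] at hv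
        rcases hv with rfl | rfl <;> assumption
  · intro a b h
    simp only [Sym2.eq_iff] at h
    rcases h with ⟨h, _⟩ | ⟨h1, h2⟩
    · exact hinj h
    · have h1 := hinj h1
      have h2 := hinj h2
      exfalso
      rw [← h2] at h1
      exact two_ne hr a h1.symm

theorem ind_param (H : SimpleGraph α) (G : SimpleGraph β) (r : ℕ) (Y S : Finset α) (hS : S ⊆ Y)
    (s : Fin (r + 1) → α) (hsurj : ∀ v ∈ Y, ∃ i, s i = v)
    (hadj : ∀ i j, H.Adj (s i) (s j) ↔ (j = i + 1 ∨ i = j + 1)) (φ : α → β) :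
    ind H G S φ = ∏ i, if (s i ∈ S ∧ s (i + 1) ∈ S) then
      adj G ((φ ∘ s) i) ((φ ∘ s) (i + 1)) else 1 := by
  classical
  by_cases h : ∀ u ∈ S, ∀ v ∈ S, H.Adj u v → G.Adj (φ u) (φ v)
  · unfold ind
    rw [if_pos h]
    symm
    apply Finset.prod_eq_one
    intro i _
    split_ifs with hi
    · unfold adj
      have := h _ hi.1 _ hi.2 ((hadj i (i + 1)).2 (Or.inl rfl))
      simp [this]
    · rfl
  · unfold ind
    rw [if_neg h]
    symm
    push Not at h
    obtain ⟨u, hu, v, hv, huv, hn⟩ := h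
    obtain ⟨i, rfl⟩ := hsurj u (hS hu)
    obtain ⟨j, rfl⟩ := hsurj v (hS hv)
    rw [hadj] at huv
    rcases huv with rfl | rfl
    · apply Finset.prod_eq_zero (Finset.mem_univ i)
      rw [if_pos ⟨hu, hv⟩]
      unfold adj
      simp [hn]
    · apply Finset.prod_eq_zero (Finset.mem_univ j)
      rw [if_pos ⟨hv, hu⟩]
      have hn' : ¬ G.Adj (φ (s j)) (φ (s (j + 1))) := fun h => hn h.symm
      unfold adj
      simp [hn']

theorem tden_param [Nonempty β] (H : SimpleGraph α) (G : SimpleGraph β) (r : ℕ) (Y S : Finset α)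
    (hS : S ⊆ Y) (s : Fin (r + 1) → α) (hinj : Function.Injective s)
    (hsurj : ∀ v ∈ Y, ∃ i, s i = v)
    (hadj : ∀ i j, H.Adj (s i) (s j) ↔ (j = i + 1 ∨ i = j + 1)) :
    tden H G S = Finset.univ.expect fun θ : Fin (r + 1) → β =>
      (∏ i : Fin r, if (s i.castSucc ∈ S ∧ s i.succ ∈ S) then
        adj G (θ i.castSucc) (θ i.succ) else 1) *
      (if (s (Fin.last r) ∈ S ∧ s 0 ∈ S) then adj G (θ (Fin.last r)) (θ 0) else 1) := by
  unfold tden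
  rw [← expect_comp s hinj]
  refine Finset.expect_congr rfl fun φ _ => ?_
  rw [ind_param H G r Y S hS s hsurj hadj, Fin.prod_univ_castSucc]
  simp only [Fin.coeSucc_eq_succ, Fin.last_add_one]

theorem cycle_step [Nonempty β] (H : SimpleGraph α) (G : SimpleGraph β) (r : ℕ)
    (hr2 : 2 ≤ r) (ρ d ε : ℝ) (hρ1 : ρ ≤ 1)
    (hd : 0 < d) (hd1 : d ≤ 1) (hε : 0 ≤ ε) (hεd : ε < d) (hρε : ρ ^ 2 ≤ ε * d ^ r)
    (hG : LocallyDense G ρ d) (Y S : Finset α) (hS : S ⊆ Y)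
    (f : H.induce (↑Y : Set α) ≃g SimpleGraph.cycleGraph (r + 1)) :
    (d - ε) ^ eIn H Y * tden H G S ≤ (d - ε) ^ eIn H S * tden H G Y := by
  classical
  by_cases hSY : S = Y
  · subst hSY; exact le_rfl
  obtain ⟨y, hy, hyS⟩ : ∃ y ∈ Y, y ∉ S := by
    by_contra hc
    push Not at hc
    exact hSY (Finset.Subset.antisymm hS hc)
  obtain ⟨s, hinj, hmem, hsurj, hadj, h0⟩ := exists_param H r hr2 Y f y hy
  rw [tden_param H G r Y S hS s hinj hsurj hadj,
    tden_param H G r Y Y (Finset.Subset.refl _) s hinj hsurj hadj,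
    eIn_param H r hr2 Y S hS s hinj hsurj hadj,
    eIn_param H r hr2 Y Y (Finset.Subset.refl _) s hinj hsurj hadj]
  have h := core G r hr2 ρ d ε hρ1 hd hd1 hε hεd hρε hG
    (fun i : Fin r => s i.castSucc ∈ S ∧ s i.succ ∈ S)
  rw [Fin.sum_univ_castSucc (f := fun i => if (s i ∈ S ∧ s (i + 1) ∈ S) then 1 else 0)]
  simp only [Fin.coeSucc_eq_succ, Fin.last_add_one, h0, hyS, and_false, if_false, hmem, and_self,
    if_true, mul_one, add_zero, hy, Finset.sum_const, Finset.card_univ, Fintype.card_fin,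
    smul_eq_mul]
  exact h

theorem eIn_bag (H : SimpleGraph α) (r : ℕ) (hr2 : 2 ≤ r) (Y : Finset α)
    (f : H.induce (↑Y : Set α) ≃g SimpleGraph.cycleGraph (r + 1)) : eIn H Y = r + 1 := by
  obtain ⟨s, hinj, hmem, hsurj, hadj, h0⟩ := exists_param H r hr2 Y f (f.symm 0).1 (f.symm 0).2
  rw [eIn_param H r hr2 Y Y (Finset.Subset.refl _) s hinj hsurj hadj]
  simp [hmem]

theorem homDensity_eq (H : SimpleGraph α) (G : SimpleGraph β) :
    homDensity H G = tden H G Finset.univ := by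
  classical
  unfold homDensity tden
  rw [Fintype.expect_eq_sum_div_card]
  congr 1
  · unfold ind
    rw [Finset.sum_boole, ← Fintype.card_subtype, ← Nat.card_eq_fintype_card]
    congr 1
    refine Nat.card_congr
      { toFun := fun f => ⟨f, fun u _ v _ h => f.map_rel h⟩
        invFun := fun f => ⟨f.1, fun {u v} h => f.2 u (Finset.mem_univ _) v (Finset.mem_univ _) h⟩
        left_inv := fun f => rfl
        right_inv := fun f => rfl }
  · simp

end

theorem pow_sub_ge (d ε : ℝ) (hε : 0 ≤ ε) (hεd : ε ≤ d) (hd1 : d ≤ 1) (e : ℕ) :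
    d ^ e - e * ε ≤ (d - ε) ^ e := by
  induction e with
  | zero => simp
  | succ e ih =>
    have h1 : 0 ≤ d - ε := by linarith
    have h2 := mul_le_mul_of_nonneg_right ih h1
    have h3 : d ^ e ≤ 1 := pow_le_one₀ (by linarith) hd1
    rw [pow_succ, pow_succ]
    push_cast
    have h4 : (e : ℝ) * ε * (d - ε) ≤ e * ε * 1 :=
      mul_le_mul_of_nonneg_left (by linarith) (by positivity)
    have h5 : d ^ e * ε ≤ 1 * ε := mul_le_mul_of_nonneg_right h3 hε
    nlinarith

end LD

theorem stmt3 {α : Type*} [Fintype α] [DecidableEq α] (k : ℕ) (hk : 3 ≤ k)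
    (H : SimpleGraph α)
    (hH : JDecomposable H (SimpleGraph.cycleGraph k))
    (η : ℝ) (hη : 0 < η) :
    ∃ (ρ : ℝ) (n₀ : ℕ), 0 < ρ ∧
      ∀ (d : ℝ), 0 < d → d ≤ 1 →
        ∀ (β : Type) [Fintype β] (G : SimpleGraph β),
          n₀ ≤ Fintype.card β → LocallyDense G ρ d →
            homDensity H G ≥ d ^ edgeCount H - η := by
  obtain ⟨ι, hι, bag, T, hTD, hcyc, hiso⟩ := hH
  obtain ⟨r, rfl⟩ : ∃ r, k = r + 1 := ⟨k - 1, by omega⟩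
  have hr2 : 2 ≤ r := by omega
  obtain ⟨X₀⟩ := hTD.1.connected.nonempty
  obtain ⟨f₀⟩ := hcyc X₀
  have hee : edgeCount H = LD.eIn H Finset.univ := by
    unfold edgeCount LD.eIn
    rw [Nat.card_coe_set_eq]
    simp
  have hrE : r ≤ edgeCount H := by
    have h1 := LD.eIn_bag H r hr2 (bag X₀) f₀
    have h2 := LD.eIn_mono H (Finset.subset_univ (bag X₀))
    omega
  set E := edgeCount H with hE
  clear_value E
  set ε : ℝ := η / (E + 2) with hεdef
  have hε : 0 < ε := by positivity
  have hεη : ε * (E + 2) = η := by rw [hεdef]; field_simp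
  have hεle : ε < η := by
    have h0 : 0 ≤ ε * (E : ℝ) := by positivity
    linarith
  refine ⟨min 1 (ε * η), 1, by positivity, ?_⟩
  intro d hd hd1 β _ G hn hG
  have hne : Nonempty β := Fintype.card_pos_iff.1 hn
  rw [LD.homDensity_eq]
  by_cases hsmall : d ^ E ≤ η
  · have : 0 ≤ LD.tden H G Finset.univ := Finset.expect_nonneg fun φ _ => LD.ind_nonneg H G _ φ
    linarith
  push Not at hsmall
  have hdE : d ^ E ≤ d ^ r := pow_le_pow_of_le_one hd.le hd1 hrE
  have hdE1 : d ^ E ≤ d := by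
    calc d ^ E ≤ d ^ 1 := pow_le_pow_of_le_one hd.le hd1 (by omega)
      _ = d := pow_one d
  have hεd : ε < d := by linarith
  have hρε : (min 1 (ε * η)) ^ 2 ≤ ε * d ^ r := by
    have h0 : 0 ≤ min 1 (ε * η) := by positivity
    have h1 : min 1 (ε * η) ≤ 1 := min_le_left _ _
    have h2 : min 1 (ε * η) ≤ ε * η := min_le_right _ _
    calc (min 1 (ε * η)) ^ 2 ≤ min 1 (ε * η) := by nlinarith
      _ ≤ ε * η := h2
      _ ≤ ε * d ^ r := mul_le_mul_of_nonneg_left (by linarith) hε.le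
  have key := LD.glue H G bag T hTD hiso (d - ε) (by linarith) (by linarith) (by
    intro Y S hS
    obtain ⟨f⟩ := hcyc Y
    exact LD.cycle_step H G r hr2 _ d ε (min_le_left _ _) hd hd1 hε.le hεd hρε hG (bag Y) S hS f)
  rw [← hee] at key
  have h1 := LD.pow_sub_ge d ε hε.le hεd.le hd1 E
  have h2 : (E : ℝ) * ε ≤ η := by nlinarith
  linarith
end

section
/- Let (X₁, X₂) and (X₂′, X₃) be random vectors taking values in finite sets S₁ × S₂ and S₂ × S₃ respectively. If X₂ and X₂′ are identically distributed, then there exists a random vector (Y₁, Y₂, Y₃) taking values in S₁ × S₂ × S₃ such that Y₁ and Y₃ are conditionally independent given Y₂, the pair (Y₁, Y₂) is identically distributed with (X₁, X₂), and the pair (Y₂, Y₃) is identically distributed with (X₂′, X₃). -/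
open MeasureTheory

/-- Two finite-valued random variables (on possibly different probability spaces)
are identically distributed. -/
def IdentDistribFin {Ω₁ Ω₂ S : Type*} [MeasurableSpace Ω₁] [MeasurableSpace Ω₂]
    (μ₁ : Measure Ω₁) (μ₂ : Measure Ω₂) (X : Ω₁ → S) (Y : Ω₂ → S) : Prop :=
  ∀ s : S, μ₁ (X ⁻¹' {s}) = μ₂ (Y ⁻¹' {s})

/-- The Shannon entropy (base 2) of a finite-valued random variable. -/
noncomputable def shannonEntropy {Ω S : Type*} [MeasurableSpace Ω] [Fintype S]
    (μ : Measure Ω) (X : Ω → S) : ℝ :=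
  -∑ s : S, (μ (X ⁻¹' {s})).toReal * Real.logb 2 (μ (X ⁻¹' {s})).toReal

/-- Realization of a random nonempty subset as the hitting outer measure of a
(not necessarily measurable) map on a finite space. -/
theorem realize_exact {M S : Type*} [MeasurableSpace M] [Fintype S] (m : Measure M)
    [IsProbabilityMeasure m] (H : S → Set M) (hH : ∀ s, MeasurableSet (H s))
    (hc : ∀ x, ∃ s, x ∈ H s) :
    ∃ (Ω'' : Type) (_ : MeasurableSpace Ω'') (ν : Measure Ω'')
      (_ : IsProbabilityMeasure ν) (Y : Ω'' → S),
      ∀ B : Set S, ν (Y ⁻¹' B) = m (⋃ s ∈ B, H s) := by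
  classical
  let e : S ≃ Fin (Fintype.card S) := Fintype.equivFin S
  choose c hcc using hc
  let Ω'' : Type := {z : (Fin (Fintype.card S) → Prop) × Fin (Fintype.card S) // z.1 z.2}
  let π : Ω'' → (Fin (Fintype.card S) → Prop) := fun z => z.1.1
  letI inst : MeasurableSpace Ω'' := MeasurableSpace.comap π ⊤
  let τ : M → (Fin (Fintype.card S) → Prop) := fun x i => x ∈ H (e.symm i)
  have hτ : Measurable τ := measurable_pi_iff.2 fun i => by
    exact measurable_mem.2 (hH _)
  let σ : M → Ω'' := fun x => ⟨(τ x, e (c x)), by simpa [τ] using hcc x⟩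
  have htop : ∀ F : Set (Fin (Fintype.card S) → Prop), MeasurableSet F := fun F =>
    F.toFinite.measurableSet
  have hσ : Measurable σ := by
    rintro _ ⟨F, -, rfl⟩
    exact hτ (htop F)
  refine ⟨Ω'', inst, m.map σ, Measure.isProbabilityMeasure_map hσ.aemeasurable,
    fun z => e.symm z.1.2, fun B => ?_⟩
  let G : Set (Fin (Fintype.card S) → Prop) := {A | ∃ s ∈ B, A (e s)}
  have hG : MeasurableSet (π ⁻¹' G) := ⟨G, trivial, rfl⟩
  have h1 : m (⋃ s ∈ B, H s) = m.map σ (π ⁻¹' G) := by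
    rw [Measure.map_apply hσ hG]
    congr 1
    ext x
    simp [G, π, σ, τ]
  rw [h1]
  apply le_antisymm
  · apply measure_mono
    rintro z hz
    exact ⟨_, hz, by simpa using z.2⟩
  · rw [← measure_toMeasurable ((fun z : Ω'' => e.symm z.1.2) ⁻¹' B)]
    apply measure_mono
    obtain ⟨F, -, hF⟩ := measurableSet_toMeasurable (m.map σ) ((fun z : Ω'' => e.symm z.1.2) ⁻¹' B)
    have hsub := subset_toMeasurable (m.map σ) ((fun z : Ω'' => e.symm z.1.2) ⁻¹' B)
    rw [← hF] at hsub ⊢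
    rintro z ⟨s, hs, hA⟩
    have : (⟨(π z, e s), hA⟩ : Ω'') ∈ π ⁻¹' F := hsub (by simpa using hs)
    exact this

theorem realize_ae {M S : Type*} [MeasurableSpace M] [Fintype S] (m : Measure M)
    [IsProbabilityMeasure m] (H : S → Set M) (hH : ∀ s, MeasurableSet (H s))
    (hc : m (⋃ s, H s)ᶜ = 0) :
    ∃ (Ω'' : Type) (_ : MeasurableSpace Ω'') (ν : Measure Ω'')
      (_ : IsProbabilityMeasure ν) (Y : Ω'' → S),
      ∀ B : Set S, ν (Y ⁻¹' B) = m (⋃ s ∈ B, H s) := by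
  have hne : Nonempty S := by
    by_contra hS
    rw [not_nonempty_iff] at hS
    simp at hc
  obtain ⟨Ω'', i, ν, hν, Y, hY⟩ := realize_exact m (fun s => H s ∪ (⋃ s, H s)ᶜ)
    (fun s => (hH s).union (MeasurableSet.iUnion hH).compl) (fun x => by
      by_cases hx : ∃ s, x ∈ H s
      · obtain ⟨s, hs⟩ := hx
        exact ⟨s, Or.inl hs⟩
      · exact ⟨hne.some, Or.inr (by simpa using hx)⟩)
  refine ⟨Ω'', i, ν, hν, Y, fun B => ?_⟩
  rw [hY]
  apply le_antisymm
  · calc m (⋃ s ∈ B, (H s ∪ (⋃ s, H s)ᶜ)) ≤ m ((⋃ s ∈ B, H s) ∪ (⋃ s, H s)ᶜ) := by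
          apply measure_mono
          refine Set.iUnion₂_subset fun s hs => Set.union_subset_union_left _ ?_
          exact Set.subset_biUnion_of_mem (u := H) hs
      _ ≤ m (⋃ s ∈ B, H s) + m (⋃ s, H s)ᶜ := measure_union_le _ _
      _ = _ := by rw [hc, add_zero]
  · exact measure_mono (Set.iUnion₂_mono fun s _ => Set.subset_union_left)

theorem exists_kernel {Ω' S₃ : Type*} [MeasurableSpace Ω'] (μ' : Measure Ω')
    [IsProbabilityMeasure μ'] (K : S₃ → Set Ω') [Fintype S₃] (hK : ∀ s, MeasurableSet (K s)) :
    ∃ κ : Measure Ω', IsProbabilityMeasure κ ∧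
      (∀ s, μ' (⋃ s, K s) * κ (K s) = μ' (K s)) ∧
      (μ' (⋃ s, K s) * κ (⋃ s, K s)ᶜ = 0) ∧
      (μ' (⋃ s, K s) * κ (⋃ s, K s) = μ' (⋃ s, K s)) := by
  have hm : MeasurableSet (⋃ s, K s) := MeasurableSet.iUnion hK
  have hmul : ∀ A, μ' (⋃ s, K s) ≠ 0 → μ' (⋃ s, K s) *
      ProbabilityTheory.cond μ' (⋃ s, K s) A = μ' ((⋃ s, K s) ∩ A) := fun A h0 => by
    rw [ProbabilityTheory.cond_apply hm, ← mul_assoc,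
      ENNReal.mul_inv_cancel h0 (measure_ne_top _ _), one_mul]
  by_cases h0 : μ' (⋃ s, K s) = 0
  · refine ⟨μ', inferInstance, fun s => ?_, by simp [h0], by simp [h0]⟩
    rw [h0, zero_mul]
    exact (measure_mono_null (Set.subset_iUnion K s) h0).symm
  · refine ⟨ProbabilityTheory.cond μ' (⋃ s, K s),
      ProbabilityTheory.cond_isProbabilityMeasure h0, fun s => ?_, ?_, ?_⟩
    · rw [hmul _ h0, Set.inter_eq_self_of_subset_right (Set.subset_iUnion K s)]
    · rw [hmul _ h0, Set.inter_compl_self, measure_empty]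
    · rw [hmul _ h0, Set.inter_self]

theorem stmt5 {S₁ S₂ S₃ : Type*} [Fintype S₁] [Fintype S₂] [Fintype S₃]
    {Ω : Type*} [MeasurableSpace Ω] (μ : Measure Ω) [IsProbabilityMeasure μ]
    {Ω' : Type*} [MeasurableSpace Ω'] (μ' : Measure Ω') [IsProbabilityMeasure μ']
    (X₁ : Ω → S₁) (X₂ : Ω → S₂) (X₂' : Ω' → S₂) (X₃ : Ω' → S₃)
    (h : IdentDistribFin μ μ' X₂ X₂') :
    ∃ (Ω'' : Type) (_ : MeasurableSpace Ω'') (ν : Measure Ω'')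
      (_ : IsProbabilityMeasure ν)
      (Y₁ : Ω'' → S₁) (Y₂ : Ω'' → S₂) (Y₃ : Ω'' → S₃),
      (∀ (s₁ : S₁) (s₂ : S₂) (s₃ : S₃), ν (Y₂ ⁻¹' {s₂}) ≠ 0 →
        ν (Y₁ ⁻¹' {s₁} ∩ Y₂ ⁻¹' {s₂} ∩ Y₃ ⁻¹' {s₃}) * ν (Y₂ ⁻¹' {s₂}) =
          ν (Y₁ ⁻¹' {s₁} ∩ Y₂ ⁻¹' {s₂}) * ν (Y₃ ⁻¹' {s₃} ∩ Y₂ ⁻¹' {s₂})) ∧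
      IdentDistribFin ν μ (fun ω => (Y₁ ω, Y₂ ω)) (fun ω => (X₁ ω, X₂ ω)) ∧
      IdentDistribFin ν μ' (fun ω => (Y₂ ω, Y₃ ω)) (fun ω => (X₂' ω, X₃ ω)) := by
  classical
  let H : S₁ → S₂ → Set Ω := fun a b =>
    toMeasurable μ ((fun ω => (X₁ ω, X₂ ω)) ⁻¹' {(a, b)})
  let K : S₂ → S₃ → Set Ω' := fun b c =>
    toMeasurable μ' ((fun ω => (X₂' ω, X₃ ω)) ⁻¹' {(b, c)})
  have hH : ∀ a b, MeasurableSet (H a b) := fun a b => measurableSet_toMeasurable _ _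
  have hK : ∀ b c, MeasurableSet (K b c) := fun b c => measurableSet_toMeasurable _ _
  have hHU : ∀ b, μ (⋃ a, H a b) = μ (X₂ ⁻¹' {b}) := fun b => by
    rw [measure_iUnion_toMeasurable]
    congr 1
    ext ω
    simp
  have hKU : ∀ b, μ' (⋃ c, K b c) = μ (X₂ ⁻¹' {b}) := fun b => by
    rw [measure_iUnion_toMeasurable, h b]
    congr 1
    ext ω
    simp
  choose κ hκp hκ1 hκ0 hκU using fun b => exists_kernel μ' (K b) (hK b)
  let m : Measure (Ω × (S₂ → Ω')) := μ.prod (Measure.pi κ)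
  have hev : ∀ (A : Set Ω) (b : S₂) (C : Set Ω'), MeasurableSet C →
      m (A ×ˢ (Function.eval b ⁻¹' C)) = μ A * κ b C := fun A b C hC => by
    rw [Measure.prod_prod, (measurePreserving_eval κ b).measure_preimage hC.nullMeasurableSet]
  let T : S₁ × S₂ × S₃ → Set (Ω × (S₂ → Ω')) := fun t =>
    H t.1 t.2.1 ×ˢ (Function.eval t.2.1 ⁻¹' K t.2.1 t.2.2)
  have hT : ∀ t, MeasurableSet (T t) := fun t =>
    (hH _ _).prod (measurable_pi_apply _ (hK _ _))
  have hc : m (⋃ t, T t)ᶜ = 0 := by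
    refine measure_mono_null (t := ⋃ b, (⋃ a, H a b) ×ˢ (Function.eval b ⁻¹' (⋃ c, K b c)ᶜ)) ?_ ?_
    · rintro ⟨ω, f⟩ hx
      have h1 : ω ∈ H (X₁ ω) (X₂ ω) := subset_toMeasurable _ _ rfl
      simp only [Set.mem_compl_iff, Set.mem_iUnion, not_exists] at hx
      refine Set.mem_iUnion.2 ⟨X₂ ω, Set.mem_iUnion.2 ⟨_, h1⟩, ?_⟩
      simp only [Set.mem_preimage, Set.mem_compl_iff, Set.mem_iUnion, not_exists]
      intro c hcc
      exact hx (X₁ ω, X₂ ω, c) ⟨h1, hcc⟩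
    · rw [measure_iUnion_null_iff]
      intro b
      rw [hev _ _ _ (MeasurableSet.iUnion (hK b)).compl, hHU, ← hKU, hκ0]
  obtain ⟨Ω'', i, ν, hν, Y, hY⟩ := realize_ae m T hT hc
  have e123 : ∀ a b c, ν (Y ⁻¹' {(a, b, c)}) = μ (H a b) * κ b (K b c) := fun a b c => by
    rw [hY, ← hev _ _ _ (hK b c)]
    simp [T]
  have e12 : ∀ a b, ν ((fun ω => ((Y ω).1, (Y ω).2.1)) ⁻¹' {(a, b)}) = μ (H a b) := fun a b => by
    have h1 : (fun ω => ((Y ω).1, (Y ω).2.1)) ⁻¹' {(a, b)} = Y ⁻¹' {t | t.1 = a ∧ t.2.1 = b} := by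
      ext; simp
    have h2 : (⋃ t ∈ {t : S₁ × S₂ × S₃ | t.1 = a ∧ t.2.1 = b}, T t)
        = H a b ×ˢ (Function.eval b ⁻¹' (⋃ c, K b c)) := by
      ext ⟨ω, f⟩
      simp only [Set.mem_iUnion, T, Set.mem_prod, Set.mem_preimage, Set.mem_ofPred_eq]
      constructor
      · rintro ⟨⟨a, b, c⟩, ⟨rfl, rfl⟩, h1, h2⟩
        exact ⟨h1, c, h2⟩
      · rintro ⟨h1, c, h2⟩
        exact ⟨(a, b, c), ⟨rfl, rfl⟩, h1, h2⟩
    rw [h1, hY, h2, hev _ _ _ (MeasurableSet.iUnion (hK b))]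
    by_cases h0 : μ' (⋃ c, K b c) = 0
    · have : μ (H a b) = 0 := by
        apply measure_mono_null (Set.subset_iUnion (fun a => H a b) a)
        rw [hHU, ← hKU, h0]
      rw [this, zero_mul]
    · have : κ b (⋃ c, K b c) = 1 := by
        have := hκU b
        rwa [ENNReal.mul_eq_left h0 (measure_ne_top _ _)] at this
      rw [this, mul_one]
  have e23 : ∀ b c, ν ((fun ω => ((Y ω).2.1, (Y ω).2.2)) ⁻¹' {(b, c)}) = μ' (K b c) := fun b c => by
    have h1 : (fun ω => ((Y ω).2.1, (Y ω).2.2)) ⁻¹' {(b, c)} = Y ⁻¹' {t | t.2 = (b, c)} := by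
      ext; simp
    have h2 : (⋃ t ∈ {t : S₁ × S₂ × S₃ | t.2 = (b, c)}, T t)
        = (⋃ a, H a b) ×ˢ (Function.eval b ⁻¹' (K b c)) := by
      ext ⟨ω, f⟩
      simp only [Set.mem_iUnion, T, Set.mem_prod, Set.mem_preimage, Set.mem_ofPred_eq]
      constructor
      · rintro ⟨⟨a, b, c⟩, ⟨rfl, rfl⟩, h1, h2⟩
        exact ⟨⟨a, h1⟩, h2⟩
      · rintro ⟨⟨a, h1⟩, h2⟩
        exact ⟨(a, b, c), rfl, h1, h2⟩
    rw [h1, hY, h2, hev _ _ _ (hK b c), hHU, ← hKU, hκ1]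
  have e2 : ∀ b, ν ((fun ω => (Y ω).2.1) ⁻¹' {b}) = μ' (⋃ c, K b c) := fun b => by
    have h1 : (fun ω => (Y ω).2.1) ⁻¹' {b} = Y ⁻¹' {t | t.2.1 = b} := by
      ext; simp
    have h2 : (⋃ t ∈ {t : S₁ × S₂ × S₃ | t.2.1 = b}, T t)
        = (⋃ a, H a b) ×ˢ (Function.eval b ⁻¹' (⋃ c, K b c)) := by
      ext ⟨ω, f⟩
      simp only [Set.mem_iUnion, T, Set.mem_prod, Set.mem_preimage, Set.mem_ofPred_eq]
      constructor
      · rintro ⟨⟨a, b, c⟩, rfl, h1, h2⟩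
        exact ⟨⟨a, h1⟩, c, h2⟩
      · rintro ⟨⟨a, h1⟩, c, h2⟩
        exact ⟨(a, b, c), rfl, h1, h2⟩
    rw [h1, hY, h2, hev _ _ _ (MeasurableSet.iUnion (hK b)), hHU, ← hKU, hκU]
  refine ⟨Ω'', i, ν, hν, fun ω => (Y ω).1, fun ω => (Y ω).2.1, fun ω => (Y ω).2.2, ?_, ?_, ?_⟩
  · intro a b c _
    have h1 : (fun ω => (Y ω).1) ⁻¹' {a} ∩ (fun ω => (Y ω).2.1) ⁻¹' {b} ∩
        (fun ω => (Y ω).2.2) ⁻¹' {c} = Y ⁻¹' {(a, b, c)} := by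
      ext; simp [Prod.ext_iff, and_assoc]
    have h2 : (fun ω => (Y ω).1) ⁻¹' {a} ∩ (fun ω => (Y ω).2.1) ⁻¹' {b}
        = (fun ω => ((Y ω).1, (Y ω).2.1)) ⁻¹' {(a, b)} := by
      ext; simp
    have h3 : (fun ω => (Y ω).2.2) ⁻¹' {c} ∩ (fun ω => (Y ω).2.1) ⁻¹' {b}
        = (fun ω => ((Y ω).2.1, (Y ω).2.2)) ⁻¹' {(b, c)} := by
      ext; simp [and_comm, Prod.ext_iff]
    rw [h1, h2, h3, e123, e12, e23, e2, ← hκ1 b c]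
    ring
  · rintro ⟨a, b⟩
    rw [e12]
    exact measure_toMeasurable _
  · rintro ⟨b, c⟩
    rw [e23]
    exact measure_toMeasurable _
end

section
/- Let G, H, and J be finite simple graphs. Suppose that H is J-decomposable with J-decomposition (F, T), and that Hom(J, G) is non-empty. Then t_H(G) ≥ t_J(G)^{|F|} / Π_{XY ∈ E(T)} t_{H[X∩Y]}(G), where H[X∩Y] denotes the subgraph of H induced on X ∩ Y. -/
open MeasureTheory

section Aux
open Finset

variable {α β ι : Type*} [Fintype α] [DecidableEq α] [Fintype β]

/-- indicator that `φ` is a homomorphism on `A`. -/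
noncomputable def indHom (H : SimpleGraph α) (G : SimpleGraph β) (A : Finset α) (φ : α → β) : ℝ :=
  open Classical in
  if ∀ u ∈ A, ∀ v ∈ A, H.Adj u v → G.Adj (φ u) (φ v) then 1 else 0

/-- resample the coordinates outside `A` and average. -/
noncomputable def condAvg (A : Finset α) (f : (α → β) → ℝ) (φ : α → β) : ℝ :=
  (∑ ψ : α → β, f (A.piecewise φ ψ)) / (Fintype.card (α → β) : ℝ)

lemma condAvg_dependsOn (A : Finset α) (f : (α → β) → ℝ) :
    DependsOn (condAvg A f) (A : Set α) := by
  intro φ φ' h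
  unfold condAvg
  congr 1
  refine Finset.sum_congr rfl fun ψ _ => ?_
  congr 1
  ext v
  by_cases hv : v ∈ A
  · simp [hv, h v hv]
  · simp [hv]

lemma indHom_dependsOn (H : SimpleGraph α) (G : SimpleGraph β) (A : Finset α) :
    DependsOn (indHom H G A) (A : Set α) := by
  intro φ φ' h
  unfold indHom
  congr 1
  apply propext
  constructor
  · intro k u hu v hv huv
    rw [← h u hu, ← h v hv]; exact k u hu v hv huv
  · intro k u hu v hv huv
    rw [h u hu, h v hv]; exact k u hu v hv huv

lemma dep_mono {f : (α → β) → ℝ} {A B : Finset α} (h : DependsOn f (A : Set α)) (hAB : A ⊆ B) :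
    DependsOn f (B : Set α) := fun _ _ k => h fun v hv => k v (hAB hv)

lemma dep_comp {f g : (α → β) → ℝ} {A : Finset α} (op : ℝ → ℝ → ℝ) (h : DependsOn f (A : Set α))
    (h' : DependsOn g (A : Set α)) : DependsOn (fun φ => op (f φ) (g φ)) (A : Set α) :=
  fun φ φ' k => by simp only [h k, h' k]

lemma sum_condAvg {F K : (α → β) → ℝ} {U L A : Finset α} (hF : DependsOn F (U : Set α))
    (hK : DependsOn K (L : Set α)) (hA : A ⊆ U) (hL : L ∩ U ⊆ A) [Nonempty (α → β)] :
    ∑ φ, F φ * condAvg A K φ = ∑ φ, F φ * K φ := by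
  have hN : (Fintype.card (α → β) : ℝ) ≠ 0 := by
    exact_mod_cast Fintype.card_ne_zero
  have key : ∑ p : (α → β) × (α → β), F p.1 * K (A.piecewise p.1 p.2)
      = ∑ p : (α → β) × (α → β), F p.1 * K p.1 := by
    let sw : (α → β) × (α → β) → (α → β) × (α → β) :=
      fun p => (U.piecewise p.1 p.2, U.piecewise p.2 p.1)
    have hsw : Function.Involutive sw := by
      rintro ⟨φ, ψ⟩
      simp only [sw, Prod.mk.injEq]
      constructor <;> ext v <;> by_cases hv : v ∈ U <;> simp [hv]
    rw [← Equiv.sum_comp hsw.toPerm]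
    refine Finset.sum_congr rfl ?_
    rintro ⟨φ, ψ⟩ -
    simp only [Function.Involutive.coe_toPerm, sw]
    congr 1
    · apply hF; intro v hv; simp [Finset.mem_coe.1 hv]
    · apply hK; intro v hv
      by_cases hvA : v ∈ A
      · simp [hvA, hA hvA]
      · have : v ∉ U := fun hu => hvA (hL (Finset.mem_inter.2 ⟨hv, hu⟩))
        simp [hvA, this]
  rw [Fintype.sum_prod_type, Fintype.sum_prod_type] at key
  simp only [Finset.sum_const, Finset.card_univ, nsmul_eq_mul, ← Finset.mul_sum] at key
  unfold condAvg
  simp only [← mul_div_assoc]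
  rw [← Finset.sum_div, key, mul_div_cancel_left₀ _ hN]

lemma indHom_nonneg (H : SimpleGraph α) (G : SimpleGraph β) (A : Finset α) (φ : α → β) :
    0 ≤ indHom H G A φ := by unfold indHom; split_ifs <;> norm_num

lemma indHom_le_one (H : SimpleGraph α) (G : SimpleGraph β) (A : Finset α) (φ : α → β) :
    indHom H G A φ ≤ 1 := by unfold indHom; split_ifs <;> norm_num

lemma indHom_eq_one (H : SimpleGraph α) (G : SimpleGraph β) (A : Finset α) (φ : α → β)
    (h : indHom H G A φ ≠ 0) : indHom H G A φ = 1 := by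
  unfold indHom at *; split_ifs at * <;> simp_all

lemma indHom_mono (H : SimpleGraph α) (G : SimpleGraph β) {A B : Finset α} (hAB : A ⊆ B)
    (φ : α → β) (h : indHom H G B φ ≠ 0) : indHom H G A φ = 1 := by
  unfold indHom at *
  simp only [ne_eq, ite_eq_right_iff, one_ne_zero, imp_false, not_not] at h
  rw [if_pos fun u hu v hv => h u (hAB hu) v (hAB hv)]

lemma condAvg_nonneg (A : Finset α) {f : (α → β) → ℝ} (hf : ∀ φ, 0 ≤ f φ) (φ : α → β) :
    0 ≤ condAvg A f φ := div_nonneg (Finset.sum_nonneg fun _ _ => hf _) (by positivity)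

lemma condAvg_zero (A : Finset α) {f : (α → β) → ℝ} (hf : ∀ φ, 0 ≤ f φ) (φ : α → β)
    (h : condAvg A f φ = 0) (ψ : α → β) : f (A.piecewise φ ψ) = 0 := by
  have : Nonempty (α → β) := ⟨φ⟩
  have hN : (Fintype.card (α → β) : ℝ) ≠ 0 := by exact_mod_cast Fintype.card_ne_zero
  unfold condAvg at h
  rw [div_eq_zero_iff, or_iff_left hN, Finset.sum_eq_zero_iff_of_nonneg fun _ _ => hf _] at h
  exact h ψ (Finset.mem_univ _)

lemma condAvg_ne_zero (A : Finset α) {f : (α → β) → ℝ} (hf : ∀ φ, 0 ≤ f φ) (φ : α → β)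
    (h : f φ ≠ 0) : condAvg A f φ ≠ 0 := fun h0 => h (by
  have := condAvg_zero A hf φ h0 φ
  rwa [show A.piecewise φ φ = φ from by ext v; simp [Finset.piecewise]] at this)

lemma indHom_of_condAvg (H : SimpleGraph α) (G : SimpleGraph β) {A B : Finset α} (hAB : A ⊆ B)
    (φ : α → β) (h : condAvg A (indHom H G B) φ ≠ 0) : indHom H G A φ = 1 := by
  unfold condAvg at h
  have h1 := (div_ne_zero_iff.1 h).1
  obtain ⟨ψ, -, hψ⟩ := Finset.exists_ne_zero_of_sum_ne_zero h1
  rw [← indHom_mono H G hAB _ hψ]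
  apply indHom_dependsOn
  intro v hv
  simp [Finset.mem_coe.1 hv]

lemma condAvg_symm (H : SimpleGraph α) (G : SimpleGraph β) (X Y : Finset α)
    (e : H.induce (X : Set α) ≃g H.induce (Y : Set α))
    (he : ∀ (v : α) (h1 : v ∈ X) (h2 : v ∈ Y), ((e ⟨v, h1⟩ : (Y : Set α)) : α) = v) (φ : α → β) :
    condAvg (X ∩ Y) (indHom H G X) φ = condAvg (X ∩ Y) (indHom H G Y) φ := by
  classical
  let e' : {v // v ∈ X} ≃ {v // v ∈ Y} := e.toEquiv
  let σ : Equiv.Perm α := e'.extendSubtype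
  have hσ : ∀ v (hv : v ∈ X), σ v = (e ⟨v, hv⟩ : (Y : Set α)) := fun v hv =>
    Equiv.extendSubtype_apply_of_mem e' v hv
  have hσY : ∀ v, σ v ∈ Y ↔ v ∈ X := fun v => by
    constructor
    · intro h
      by_contra hv
      exact Equiv.extendSubtype_not_mem e' v hv h
    · intro h
      exact Equiv.extendSubtype_mem e' v h
  have hfix : ∀ v ∈ X ∩ Y, σ v = v := fun v hv => by
    obtain ⟨h1, h2⟩ := Finset.mem_inter.1 hv
    rw [hσ v h1, he v h1 h2]
  have hnot : ∀ v, v ∉ X ∩ Y → σ v ∉ X ∩ Y := fun v hv h => by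
    have := σ.injective (hfix _ h)
    rw [this] at h; exact hv h
  have hadj : ∀ u ∈ X, ∀ v ∈ X, (H.Adj (σ u) (σ v) ↔ H.Adj u v) := fun u hu v hv => by
    rw [hσ u hu, hσ v hv]
    exact e.map_rel_iff (a := ⟨u, hu⟩) (b := ⟨v, hv⟩)
  have hind : ∀ χ : α → β, indHom H G Y χ = indHom H G X (χ ∘ σ) := fun χ => by
    unfold indHom
    congr 1
    apply propext
    constructor
    · intro k u hu v hv huv
      exact k _ ((hσY u).2 hu) _ ((hσY v).2 hv) ((hadj u hu v hv).2 huv)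
    · intro k u hu v hv huv
      obtain ⟨u, rfl⟩ := σ.surjective u
      obtain ⟨v, rfl⟩ := σ.surjective v
      have hu := (hσY u).1 hu
      have hv := (hσY v).1 hv
      exact k u hu v hv ((hadj u hu v hv).1 huv)
  unfold condAvg
  congr 1
  rw [← Equiv.sum_comp (Equiv.arrowCongr σ.symm (Equiv.refl β))]
  refine Finset.sum_congr rfl fun ψ _ => ?_
  rw [hind]
  congr 1
  ext v
  by_cases hv : v ∈ X ∩ Y
  · have h1 : σ v ∈ X ∩ Y := by rw [hfix v hv]; exact hv
    simp only [Function.comp, Finset.piecewise, if_pos hv, if_pos h1, hfix v hv]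
  · simp only [Function.comp, Finset.piecewise, if_neg hv, if_neg (hnot v hv)]
    simp [Equiv.arrowCongr]

lemma tree_induct [Fintype ι] [DecidableEq ι] (T : SimpleGraph ι) [DecidableRel T.Adj]
    (hT : T.IsTree) (P : Finset ι → Finset (Sym2 ι) → Prop)
    (h0 : ∀ r, P {r} ∅)
    (hs : ∀ S E L M, L ∉ S → M ∈ S → T.Adj L M → s(L, M) ∉ E →
      (∀ Y ∈ S, ∃ p : T.Walk L Y, p.IsPath ∧ M ∈ p.support) → P S E →
      P (insert L S) (insert s(L, M) E)) : P Finset.univ T.edgeFinset := by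
  obtain ⟨hc, hac⟩ := hT
  have r : ι := hc.nonempty.some
  have main : ∀ n, n + 1 ≤ Fintype.card ι → ∃ S E, S.card = n + 1 ∧ P S E ∧
      (∀ X ∈ S, ∀ Y ∈ S, ∃ p : T.Walk X Y, ∀ Z ∈ p.support, Z ∈ S) ∧
      (∀ X Y, s(X, Y) ∈ E ↔ T.Adj X Y ∧ X ∈ S ∧ Y ∈ S) := by
    intro n
    induction n with
    | zero =>
      intro _
      refine ⟨{r}, ∅, by simp, h0 r, ?_, ?_⟩
      · simp only [Finset.mem_singleton]
        rintro X rfl Y rfl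
        exact ⟨SimpleGraph.Walk.nil, by simp⟩
      · intro X Y
        simp only [Finset.notMem_empty, Finset.mem_singleton, false_iff]
        rintro ⟨h, rfl, rfl⟩
        exact T.loopless.irrefl _ h
    | succ n ih =>
      intro hn
      obtain ⟨S, E, hcard, hP, hw, hE⟩ := ih (by omega)
      have hex : ∃ M ∈ S, ∃ L, L ∉ S ∧ T.Adj M L := by
        obtain ⟨a, ha⟩ : S.Nonempty := Finset.card_pos.1 (by omega)
        obtain ⟨b, hb⟩ : ∃ b, b ∉ S := by
          by_contra! h
          have : S = Finset.univ := Finset.eq_univ_iff_forall.2 h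
          rw [this, Finset.card_univ] at hcard; omega
        obtain ⟨p⟩ := hc.preconnected a b
        obtain ⟨d, -, h1, h2⟩ := p.exists_boundary_dart (S : Set ι) ha hb
        exact ⟨d.fst, h1, d.snd, h2, d.adj⟩
      obtain ⟨M, hM, L, hL, hML⟩ := hex
      have hpath : ∀ Y ∈ S, ∃ p : T.Walk M Y, p.IsPath ∧ L ∉ p.support := by
        intro Y hY
        obtain ⟨p, hp⟩ := hw M hM Y hY
        exact ⟨p.bypass, p.bypass_isPath, fun h => hL (hp _ (p.support_bypass_subset h))⟩
      refine ⟨insert L S, insert s(L, M) E, by rw [Finset.card_insert_of_notMem hL, hcard],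
        hs S E L M hL hM hML.symm (fun h => hL ((hE _ _).1 h).2.1) ?_ hP, ?_, ?_⟩
      · intro Y hY
        obtain ⟨p, hp, hLp⟩ := hpath Y hY
        exact ⟨SimpleGraph.Walk.cons hML.symm p, hp.cons hLp, by simp⟩
      · have hw1 : ∀ X ∈ insert L S, ∃ p : T.Walk X M, ∀ Z ∈ p.support, Z ∈ insert L S := by
          intro X hX
          rcases Finset.mem_insert.1 hX with rfl | hX
          · refine ⟨SimpleGraph.Walk.cons hML.symm SimpleGraph.Walk.nil, ?_⟩
            simp [hM]
          · obtain ⟨p, hp⟩ := hw X hX M hM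
            exact ⟨p, fun Z hZ => Finset.mem_insert_of_mem (hp Z hZ)⟩
        intro X hX Y hY
        obtain ⟨p, hp⟩ := hw1 X hX
        obtain ⟨q, hq⟩ := hw1 Y hY
        refine ⟨p.append q.reverse, fun Z hZ => ?_⟩
        rw [SimpleGraph.Walk.mem_support_append_iff] at hZ
        rcases hZ with hZ | hZ
        · exact hp Z hZ
        · exact hq Z (by simpa using hZ)
      · have huniq : ∀ Y ∈ S, T.Adj L Y → Y = M := by
          intro Y hY hLY
          obtain ⟨p, hp, hLp⟩ := hpath Y hY
          have h1 : (SimpleGraph.Walk.cons hML.symm p).IsPath := hp.cons hLp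
          have h2 : (SimpleGraph.Walk.cons hLY SimpleGraph.Walk.nil).IsPath := by
            simp [hLY.ne]
          have := hac.path_unique ⟨_, h1⟩ ⟨_, h2⟩
          have h3 := congrArg (fun q : T.Path L Y => q.1.support) this
          simp only [SimpleGraph.Walk.support_cons, SimpleGraph.Walk.support_nil,
            List.cons.injEq, true_and] at h3
          have : M ∈ p.support := p.start_mem_support
          rw [h3] at this
          exact (List.mem_singleton.1 this).symm
        intro X Y
        rw [Finset.mem_insert, hE, Sym2.eq_iff]
        simp only [Finset.mem_insert]
        constructor
        · rintro ((⟨rfl, rfl⟩ | ⟨rfl, rfl⟩) | h)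
          · exact ⟨hML.symm, Or.inl rfl, Or.inr hM⟩
          · exact ⟨hML, Or.inr hM, Or.inl rfl⟩
          · exact ⟨h.1, Or.inr h.2.1, Or.inr h.2.2⟩
        · rintro ⟨h, rfl | hX, rfl | hY⟩
          · exact absurd h (T.loopless.irrefl _)
          · exact Or.inl (Or.inl ⟨rfl, huniq Y hY h⟩)
          · exact Or.inl (Or.inr ⟨huniq X hX h.symm, rfl⟩)
          · exact Or.inr ⟨h, hX, hY⟩
  have hpos : 0 < Fintype.card ι := Fintype.card_pos_iff.2 ⟨r⟩
  obtain ⟨S, E, hcard, hP, -, hE⟩ := main (Fintype.card ι - 1) (by omega)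
  have hS : S = Finset.univ := by
    rw [← Finset.card_eq_iff_eq_univ]; omega
  have hEE : E = T.edgeFinset := by
    ext e
    induction e using Sym2.ind with
    | _ X Y => rw [hE, hS]; simp
  rw [← hS, ← hEE]; exact hP

/-- weight function -/
noncomputable def wt (H : SimpleGraph α) (G : SimpleGraph β) (bag : ι → Finset α)
    (d : Sym2 ι → (α → β) → ℝ) (S : Finset ι) (E : Finset (Sym2 ι)) (φ : α → β) : ℝ :=
  (∏ X ∈ S, indHom H G (bag X) φ) / ∏ e ∈ E, d e φ

lemma wt_marginal [Fintype ι] [DecidableEq ι] (H : SimpleGraph α) (G : SimpleGraph β)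
    (bag : ι → Finset α) (T : SimpleGraph ι) [DecidableRel T.Adj] [Nonempty (α → β)]
    (hdec : IsTreeDecomp H bag T) (d : Sym2 ι → (α → β) → ℝ)
    (hd : ∀ X Y, T.Adj X Y → d s(X, Y) = condAvg (bag X ∩ bag Y) (indHom H G (bag X))) :
    ∀ X, ∀ g : (α → β) → ℝ, DependsOn g (bag X : Set α) →
      ∑ φ, g φ * wt H G bag d Finset.univ T.edgeFinset φ = ∑ φ, g φ * indHom H G (bag X) φ := by
  obtain ⟨hT, -, -, hpath⟩ := hdec
  have := tree_induct T hT (fun S E => DependsOn (wt H G bag d S E) (S.biUnion bag : Set α) ∧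
    ∀ X ∈ S, ∀ g : (α → β) → ℝ, DependsOn g (bag X : Set α) →
      ∑ φ, g φ * wt H G bag d S E φ = ∑ φ, g φ * indHom H G (bag X) φ) ?_ ?_
  · exact fun X g hg => this.2 X (Finset.mem_univ _) g hg
  · intro r
    have : wt H G bag d {r} ∅ = indHom H G (bag r) := by
      ext φ; simp [wt]
    rw [this]
    refine ⟨?_, ?_⟩
    · simpa using indHom_dependsOn H G (bag r)
    · intro X hX g hg
      rw [Finset.mem_singleton.1 hX]
  · rintro S E L M hL hM hLM hE hp ⟨hdep, ih⟩
    set A := bag L ∩ bag M with hA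
    set U := S.biUnion bag with hU
    have hAL : A ⊆ bag L := Finset.inter_subset_left
    have hAM : A ⊆ bag M := Finset.inter_subset_right
    have hMU : bag M ⊆ U := Finset.subset_biUnion_of_mem bag hM
    have hAU : A ⊆ U := hAM.trans hMU
    have hLU : bag L ∩ U ⊆ A := by
      intro v hv
      obtain ⟨h1, h2⟩ := Finset.mem_inter.1 hv
      obtain ⟨Y, hY, hvY⟩ := Finset.mem_biUnion.1 h2
      obtain ⟨p, hpp, hMp⟩ := hp Y hY
      exact Finset.mem_inter.2 ⟨h1, hpath L Y M p hpp hMp (Finset.mem_inter.2 ⟨h1, hvY⟩)⟩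
    set D := d s(L, M) with hD
    have hDL : D = condAvg A (indHom H G (bag L)) := hd L M hLM
    have hDM : D = condAvg A (indHom H G (bag M)) := by
      rw [hD, Sym2.eq_swap, hd M L hLM.symm, hA, Finset.inter_comm]
    have hDdep : DependsOn D (A : Set α) := by rw [hDL]; exact condAvg_dependsOn _ _
    have hins : ∀ φ, wt H G bag d (insert L S) (insert s(L, M) E) φ
        = wt H G bag d S E φ / D φ * indHom H G (bag L) φ := by
      intro φ
      unfold wt
      rw [Finset.prod_insert hL, Finset.prod_insert hE, hD]
      simp only [div_eq_mul_inv, mul_inv]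
      ring
    have hwM : ∀ φ, wt H G bag d S E φ ≠ 0 → D φ ≠ 0 := by
      intro φ h
      rw [hDM]
      apply condAvg_ne_zero _ (indHom_nonneg _ _ _)
      exact Finset.prod_ne_zero_iff.1 (div_ne_zero_iff.1 h).1 M hM
    refine ⟨?_, ?_⟩
    · have h1 : DependsOn (fun φ => wt H G bag d S E φ / D φ * indHom H G (bag L) φ)
          ((insert L S).biUnion bag : Set α) := by
        rw [Finset.biUnion_insert]
        have hUU : U ⊆ bag L ∪ U := Finset.subset_union_right
        exact dep_comp (· * ·) (dep_comp (· / ·) (dep_mono hdep hUU)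
          (dep_mono hDdep (hAU.trans hUU))) (dep_mono (indHom_dependsOn H G _)
            Finset.subset_union_left)
      have : wt H G bag d (insert L S) (insert s(L, M) E) = _ := funext hins
      rw [this]; exact h1
    · intro X hX g hg
      simp only [hins]
      rcases Finset.mem_insert.1 hX with rfl | hX
      · have e1 : ∑ φ, g φ * (wt H G bag d S E φ / D φ * indHom H G (bag X) φ)
          = ∑ φ, (wt H G bag d S E φ / D φ) * (g φ * indHom H G (bag X) φ) :=
          Finset.sum_congr rfl fun φ _ => by ring
        have hF : DependsOn (fun φ => wt H G bag d S E φ / D φ) (U : Set α) :=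
          dep_comp (· / ·) hdep (dep_mono hDdep hAU)
        have hK : DependsOn (fun φ => g φ * indHom H G (bag X) φ) (bag X : Set α) :=
          dep_comp (· * ·) hg (indHom_dependsOn H G _)
        rw [e1, ← sum_condAvg hF hK hAU hLU]
        set C := condAvg A (fun φ => g φ * indHom H G (bag X) φ) with hC
        have hCdep : DependsOn C (A : Set α) := condAvg_dependsOn _ _
        have hh : DependsOn (fun φ => C φ / D φ) (A : Set α) := dep_comp (· / ·) hCdep hDdep
        have e2 : ∑ φ, (wt H G bag d S E φ / D φ) * C φ
            = ∑ φ, (C φ / D φ) * wt H G bag d S E φ :=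
          Finset.sum_congr rfl fun φ _ => by ring
        rw [e2, ih M hM _ (dep_mono hh hAM),
          ← sum_condAvg hh (indHom_dependsOn H G (bag M)) (Finset.Subset.refl A)
            Finset.inter_subset_right, ← hDM]
        have e3 : ∑ φ, C φ / D φ * D φ = ∑ φ, (1 : ℝ) * C φ := by
          refine Finset.sum_congr rfl fun φ _ => ?_
          by_cases h : D φ = 0
          · have : C φ = 0 := by
              rw [hC]; unfold condAvg
              rw [Finset.sum_eq_zero, zero_div]
              intro ψ _
              rw [hDL] at h
              simp only [condAvg_zero A (indHom_nonneg H G _) φ h ψ, mul_zero]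
            simp [this]
          · rw [div_mul_cancel₀ _ h, one_mul]
        rw [e3, hC, sum_condAvg (F := fun _ => (1 : ℝ)) (U := A) (fun _ _ _ => rfl) hK
          (Finset.Subset.refl A) Finset.inter_subset_right]
        simp
      · have e1 : ∑ φ, g φ * (wt H G bag d S E φ / D φ * indHom H G (bag L) φ)
          = ∑ φ, (g φ * (wt H G bag d S E φ / D φ)) * indHom H G (bag L) φ :=
          Finset.sum_congr rfl fun φ _ => by ring
        have hF : DependsOn (fun φ => g φ * (wt H G bag d S E φ / D φ)) (U : Set α) :=
          dep_comp (· * ·) (dep_mono hg (Finset.subset_biUnion_of_mem bag hX))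
            (dep_comp (· / ·) hdep (dep_mono hDdep hAU))
        rw [e1, ← sum_condAvg hF (indHom_dependsOn H G (bag L)) hAU hLU, ← hDL, ← ih X hX g hg]
        refine Finset.sum_congr rfl fun φ _ => ?_
        by_cases h : wt H G bag d S E φ = 0
        · simp [h]
        · rw [mul_assoc, div_mul_cancel₀ _ (hwM φ h)]

lemma edge_bound (H : SimpleGraph α) (G : SimpleGraph β) {A B : Finset α} (hAB : A ⊆ B)
    (D : (α → β) → ℝ) (hD : D = condAvg A (indHom H G B)) {τ : ℝ} (hτ : 0 < τ)
    (hB : ∑ φ, indHom H G B φ = τ) [Nonempty (α → β)] :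
    0 < ∑ φ, indHom H G A φ ∧
    τ * Real.log (τ / ∑ φ, indHom H G A φ) ≤ ∑ φ, Real.log (D φ) * indHom H G B φ := by
  set s := ∑ φ, indHom H G A φ with hs
  have hDnn : ∀ φ, 0 ≤ D φ := by rw [hD]; exact condAvg_nonneg _ (indHom_nonneg H G B)
  have hτs : τ ≤ s := by
    rw [← hB, hs]
    refine Finset.sum_le_sum fun φ _ => ?_
    by_cases h : indHom H G B φ = 0
    · rw [h]; exact indHom_nonneg _ _ _ _
    · rw [indHom_mono H G hAB φ h]; exact indHom_le_one _ _ _ _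
  have hs0 : 0 < s := hτ.trans_le hτs
  refine ⟨hs0, ?_⟩
  have h1 : ∀ φ, indHom H G B φ * Real.log (τ / s) + (indHom H G B φ - τ / s * ((D φ)⁻¹ * indHom H G B φ))
      ≤ Real.log (D φ) * indHom H G B φ := by
    intro φ
    by_cases h : indHom H G B φ = 0
    · simp [h]
    · have hDp : 0 < D φ := lt_of_le_of_ne (hDnn φ)
        (by rw [hD]; exact (condAvg_ne_zero _ (indHom_nonneg H G B) φ h).symm)
      rw [indHom_eq_one H G B φ h]
      have h2 : 0 < τ / s := div_pos hτ hs0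
      have := Real.log_le_sub_one_of_pos (mul_pos h2 (inv_pos.2 hDp))
      rw [Real.log_mul h2.ne' (inv_pos.2 hDp).ne', Real.log_inv] at this
      linarith
  have h2 := Finset.sum_le_sum fun φ (_ : φ ∈ Finset.univ) => h1 φ
  rw [Finset.sum_add_distrib, Finset.sum_sub_distrib, ← Finset.sum_mul, ← Finset.mul_sum, hB] at h2
  have hDdep : DependsOn (fun φ => (D φ)⁻¹) (A : Set α) := by
    rw [hD]; intro φ φ' k; simp only [condAvg_dependsOn A _ k]
  have h3 : ∑ φ, (D φ)⁻¹ * indHom H G B φ ≤ s := by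
    rw [← sum_condAvg hDdep (indHom_dependsOn H G B) (Finset.Subset.refl A)
      Finset.inter_subset_right, ← hD]
    refine Finset.sum_le_sum fun φ _ => ?_
    by_cases h : D φ = 0
    · rw [h, mul_zero]; exact indHom_nonneg _ _ _ _
    · rw [inv_mul_cancel₀ h, indHom_of_condAvg H G hAB φ (by rw [← hD]; exact h)]
  have h4 : τ / s * ∑ φ, (D φ)⁻¹ * indHom H G B φ ≤ τ := by
    calc _ ≤ τ / s * s := by gcongr
      _ = τ := div_mul_cancel₀ _ hs0.ne'
  linarith

lemma core_bound [Fintype ι] [DecidableEq ι] (H : SimpleGraph α) (G : SimpleGraph β)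
    (bag : ι → Finset α) (T : SimpleGraph ι) [DecidableRel T.Adj] [Nonempty (α → β)]
    (hdec : IsTreeDecomp H bag T)
    (hiso : ∀ X Y : ι, T.Adj X Y → ∃ e : H.induce ↑(bag X) ≃g H.induce ↑(bag Y),
      ∀ (v : α) (h1 : v ∈ bag X) (h2 : v ∈ bag Y), ((e ⟨v, h1⟩ : ↑(bag Y)) : α) = v)
    {τ : ℝ} (hτ : 0 < τ) (hbag : ∀ X, ∑ φ, indHom H G (bag X) φ = τ)
    (s : Sym2 ι → ℝ) (hs : ∀ X Y, s s(X, Y) = ∑ φ, indHom H G (bag X ∩ bag Y) φ) :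
    (∀ e ∈ T.edgeFinset, 0 < s e) ∧
    τ * ∏ e ∈ T.edgeFinset, (τ / s e) ≤ ∑ φ, ∏ X, indHom H G (bag X) φ := by
  have hex : ∀ e : Sym2 ι, ∃ p : ι × ι, s(p.1, p.2) = e := fun e => by
    induction e using Sym2.ind with
    | _ X Y => exact ⟨(X, Y), rfl⟩
  choose o ho using hex
  let d : Sym2 ι → (α → β) → ℝ := fun e =>
    condAvg (bag (o e).1 ∩ bag (o e).2) (indHom H G (bag (o e).1))
  have hd : ∀ X Y, T.Adj X Y → d s(X, Y) = condAvg (bag X ∩ bag Y) (indHom H G (bag X)) := by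
    intro X Y hXY
    simp only [d]
    rcases Sym2.eq_iff.1 (ho s(X, Y)) with ⟨h1, h2⟩ | ⟨h1, h2⟩
    · rw [h1, h2]
    · rw [h1, h2]
      obtain ⟨e, he⟩ := hiso Y X hXY.symm
      ext φ
      rw [condAvg_symm H G (bag Y) (bag X) e he φ, Finset.inter_comm]
  have hmarg := wt_marginal H G bag T hdec d hd
  set w := wt H G bag d Finset.univ T.edgeFinset with hw
  have hedge : ∀ e ∈ T.edgeFinset, 0 < s e ∧
      τ * Real.log (τ / s e) ≤ ∑ φ, Real.log (d e φ) * w φ := by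
    intro e
    induction e using Sym2.ind with
    | _ X Y =>
      intro he
      have hXY : T.Adj X Y := by simpa using he
      have hdep : DependsOn (fun φ => Real.log (d s(X, Y) φ)) (bag X : Set α) := by
        apply dep_mono (A := bag X ∩ bag Y) _ Finset.inter_subset_left
        rw [hd X Y hXY]; intro φ φ' k; simp only [condAvg_dependsOn _ _ k]
      rw [hmarg X _ hdep, hs]
      exact edge_bound H G Finset.inter_subset_left _ (hd X Y hXY) hτ (hbag X)
  refine ⟨fun e he => (hedge e he).1, ?_⟩
  obtain ⟨r⟩ : Nonempty ι := hdec.1.1.nonempty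
  have hwsum : ∑ φ, w φ = τ := by
    have := hmarg r (fun _ => 1) (fun _ _ _ => rfl)
    simpa [hbag] using this
  set a := ∑ φ, ∏ X, indHom H G (bag X) φ with ha
  have hInn : ∀ φ, 0 ≤ ∏ X, indHom H G (bag X) φ := fun φ =>
    Finset.prod_nonneg fun X _ => indHom_nonneg _ _ _ _
  have ha0 : 0 < a := by
    obtain ⟨φ, -, hφ⟩ := Finset.exists_ne_zero_of_sum_ne_zero (hwsum.trans_ne hτ.ne')
    have h1 := (div_ne_zero_iff.1 hφ).1
    exact Finset.sum_pos' (fun φ _ => hInn φ) ⟨φ, Finset.mem_univ _, lt_of_le_of_ne (hInn φ) h1.symm⟩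
  have hdnn : ∀ e φ, 0 ≤ d e φ := fun e φ => condAvg_nonneg _ (indHom_nonneg H G _) φ
  have hpt : ∀ φ, (∑ e ∈ T.edgeFinset, Real.log (d e φ) * w φ) ≤
      Real.log (a / τ) * w φ + (τ / a * (∏ X, indHom H G (bag X) φ) - w φ) := by
    intro φ
    by_cases h : ∏ X, indHom H G (bag X) φ = 0
    · have : w φ = 0 := by rw [hw]; unfold wt; rw [h, zero_div]
      simp [this, h]
    · have hX := Finset.prod_ne_zero_iff.1 h
      have h1 : ∏ X, indHom H G (bag X) φ = 1 :=
        Finset.prod_eq_one fun X hx => indHom_eq_one _ _ _ _ (hX X hx)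
      have hde : ∀ e, 0 < d e φ := fun e => lt_of_le_of_ne (hdnn e φ)
        (condAvg_ne_zero _ (indHom_nonneg H G _) φ (hX _ (Finset.mem_univ _))).symm
      have hq : 0 < ∏ e ∈ T.edgeFinset, d e φ := Finset.prod_pos fun e _ => hde e
      have hwφ : w φ = (∏ e ∈ T.edgeFinset, d e φ)⁻¹ := by
        rw [hw]; unfold wt; rw [h1, one_div]
      rw [← Finset.sum_mul, ← Real.log_prod (fun e _ => (hde e).ne'), h1]
      set q := ∏ e ∈ T.edgeFinset, d e φ
      have hta : 0 < τ / a := div_pos hτ ha0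
      have hl := Real.log_le_sub_one_of_pos (mul_pos hta hq)
      rw [Real.log_mul hta.ne' hq.ne'] at hl
      have hinv : Real.log (τ / a) = - Real.log (a / τ) := by
        rw [← Real.log_inv, inv_div]
      have hwp : 0 < w φ := by rw [hwφ]; positivity
      have hqw : q * w φ = 1 := by rw [hwφ]; exact mul_inv_cancel₀ hq.ne'
      have := mul_le_mul_of_nonneg_right hl hwp.le
      rw [hinv] at this
      have e : (τ / a * q - 1) * w φ = τ / a * (q * w φ) - w φ := by ring
      rw [e, hqw] at this
      linarith
  have hsum := Finset.sum_le_sum fun φ (_ : φ ∈ Finset.univ) => hpt φ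
  rw [Finset.sum_comm, Finset.sum_add_distrib, Finset.sum_sub_distrib, ← Finset.mul_sum,
    ← Finset.mul_sum, hwsum, ← ha, div_mul_cancel₀ _ ha0.ne', sub_self, add_zero] at hsum
  have hlow := (Finset.sum_le_sum fun e he => (hedge e he).2).trans hsum
  have hrat : ∀ e ∈ T.edgeFinset, 0 < τ / s e := fun e he => div_pos hτ (hedge e he).1
  rw [← Finset.mul_sum, ← Real.log_prod (fun e he => (hrat e he).ne'), mul_comm] at hlow
  have hl2 := le_of_mul_le_mul_right hlow hτ
  have hpp := Finset.prod_pos hrat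
  have := (Real.log_le_log_iff hpp (div_pos ha0 hτ)).1 hl2
  rwa [le_div_iff₀ hτ, mul_comm] at this

lemma homDensity_induce (H : SimpleGraph α) (G : SimpleGraph β) (A : Finset α)
    [Nonempty (α → β)] :
    homDensity (H.induce (A : Set α)) G
      = (∑ φ : α → β, indHom H G A φ) / (Fintype.card (α → β) : ℝ) := by
  classical
  have hN : (Fintype.card (α → β) : ℝ) ≠ 0 := by exact_mod_cast Fintype.card_ne_zero
  let E : {φ : α → β // ∀ u ∈ A, ∀ v ∈ A, H.Adj u v → G.Adj (φ u) (φ v)} ≃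
      (H.induce (A : Set α) →g G) × ({v // v ∉ A} → β) :=
    { toFun := fun φ => (⟨fun v => φ.1 v.1, fun {u v} h => φ.2 u.1 u.2 v.1 v.2 h⟩, fun v => φ.1 v.1)
      invFun := fun p => ⟨fun v => if h : v ∈ A then p.1 ⟨v, h⟩ else p.2 ⟨v, h⟩, by
        intro u hu v hv huv
        simp only [hu, hv, dif_pos]
        exact p.1.map_rel (a := ⟨u, hu⟩) (b := ⟨v, hv⟩) huv⟩
      left_inv := by
        intro φ; ext v; by_cases h : v ∈ A <;> simp [h]
      right_inv := by
        rintro ⟨f, g⟩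
        refine Prod.ext ?_ ?_
        · ext v
          have : v.1 ∈ A := v.2
          simp [this]
        · ext v
          simp [v.2] }
  have h1 : ∑ φ : α → β, indHom H G A φ
      = (Nat.card (H.induce (A : Set α) →g G) : ℝ) * (Fintype.card β : ℝ) ^ (Fintype.card {v // v ∉ A}) := by
    unfold indHom
    rw [Finset.sum_boole, ← Fintype.card_subtype, ← Nat.card_eq_fintype_card, Nat.card_congr E,
      Nat.card_prod]
    simp [Nat.card_eq_fintype_card]
  have h2 : (Fintype.card (α → β) : ℝ) = (Fintype.card β : ℝ) ^ (Fintype.card (A : Set α)) *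
      (Fintype.card β : ℝ) ^ (Fintype.card {v // v ∉ A}) := by
    rw [← pow_add, Fintype.card_fun, Nat.cast_pow]
    congr 1
    have := Fintype.card_subtype_compl (fun v => v ∈ A)
    have h3 := Fintype.card_subtype_le (fun v => v ∈ A)
    have h4 : Fintype.card (A : Set α) = Fintype.card {v // v ∈ A} := Fintype.card_congr (Equiv.refl _)
    rw [h4]; omega
  rw [h2] at hN ⊢
  unfold homDensity
  rw [h1, mul_div_mul_right _ _ (right_ne_zero_of_mul hN)]

lemma homDensity_total [Fintype ι] (H : SimpleGraph α) (G : SimpleGraph β) (bag : ι → Finset α)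
    (hcov : ∀ u v : α, H.Adj u v → ∃ X, u ∈ bag X ∧ v ∈ bag X) :
    homDensity H G
      = (∑ φ : α → β, ∏ X, indHom H G (bag X) φ) / (Fintype.card (α → β) : ℝ) := by
  classical
  let E : {φ : α → β // ∀ u v, H.Adj u v → G.Adj (φ u) (φ v)} ≃ (H →g G) :=
    { toFun := fun φ => ⟨φ.1, fun {u v} h => φ.2 u v h⟩
      invFun := fun p => ⟨p, fun u v h => p.map_rel h⟩
      left_inv := fun _ => rfl
      right_inv := fun _ => rfl }
  have h1 : ∀ φ : α → β, ∏ X, indHom H G (bag X) φ =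
      if ∀ u v, H.Adj u v → G.Adj (φ u) (φ v) then 1 else 0 := by
    intro φ
    split_ifs with h
    · refine Finset.prod_eq_one fun X _ => ?_
      unfold indHom
      rw [if_pos fun u _ v _ => h u v]
    · push Not at h
      obtain ⟨u, v, huv, hG⟩ := h
      obtain ⟨X, hu, hv⟩ := hcov u v huv
      apply Finset.prod_eq_zero (Finset.mem_univ X)
      unfold indHom
      rw [if_neg fun k => hG (k u hu v hv huv)]
  simp only [h1]
  rw [Finset.sum_boole, ← Fintype.card_subtype, ← Nat.card_eq_fintype_card, Nat.card_congr E,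
    Fintype.card_fun, Nat.cast_pow]
  rfl

end Aux

theorem stmt6 {α β γ : Type*} [Fintype α] [DecidableEq α] [Fintype β] [Fintype γ]
    (G : SimpleGraph β) (H : SimpleGraph α) (J : SimpleGraph γ)
    (ι : Type) [Fintype ι] [DecidableEq ι]
    (bag : ι → Finset α) (T : SimpleGraph ι) [DecidableRel T.Adj]
    (hdec : IsJDecomp H J bag T)
    (hhom : Nonempty (J →g G)) :
    homDensity H G ≥
      homDensity J G ^ (Fintype.card ι) /
        ∏ e ∈ T.edgeFinset,
          Sym2.lift
            ⟨fun X Y => homDensity (H.induce ↑(bag X ∩ bag Y)) G,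
             fun X Y => by simp only []; rw [Finset.inter_comm]⟩ e := by
  obtain ⟨htd, hJ, hiso⟩ := hdec
  obtain ⟨f⟩ := hhom
  have hne : Nonempty (α → β) := by
    refine ⟨fun v => ?_⟩
    exact f ((hJ (htd.2.1 v).choose).some ⟨v, (htd.2.1 v).choose_spec⟩)
  have hN : (0 : ℝ) < (Fintype.card (α → β) : ℝ) := by exact_mod_cast Fintype.card_pos
  set N : ℝ := (Fintype.card (α → β) : ℝ) with hNdef
  set t := homDensity J G with ht
  have htX : ∀ X, homDensity (H.induce (bag X : Set α)) G = t := by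
    intro X
    obtain ⟨e⟩ := hJ X
    rw [ht]
    unfold homDensity
    rw [Fintype.card_congr e.toEquiv]
    congr 2
    exact Nat.card_congr
      { toFun := fun g => g.comp e.symm.toHom
        invFun := fun g => g.comp e.toHom
        left_inv := fun g => by ext v; simp
        right_inv := fun g => by ext v; simp }
  have hbag : ∀ X, ∑ φ, indHom H G (bag X) φ = N * t := by
    intro X
    rw [← htX X, homDensity_induce, mul_div_cancel₀ _ hN.ne']
  have ht0 : 0 < t := by
    have h1 : 0 < Nat.card (J →g G) := by
      have : Finite (J →g G) := Finite.of_injective (fun g => (g : γ → β)) DFunLike.coe_injective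
      exact Nat.card_pos_iff.2 ⟨⟨f⟩, this⟩
    have h2 : (0 : ℝ) < (Fintype.card β : ℝ) ^ Fintype.card γ := by
      have : Nonempty (γ → β) := ⟨f⟩
      classical
      have := Fintype.card_pos (α := γ → β)
      rw [Fintype.card_fun] at this
      exact_mod_cast this
    rw [ht]; unfold homDensity
    exact div_pos (by exact_mod_cast h1) h2
  set q : Sym2 ι → ℝ := fun e => Sym2.lift
            ⟨fun X Y => homDensity (H.induce ↑(bag X ∩ bag Y)) G,
             fun X Y => by simp only []; rw [Finset.inter_comm]⟩ e with hq
  obtain ⟨hpos, hmain⟩ := core_bound H G bag T htd hiso (mul_pos hN ht0) hbag (fun e => N * q e)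
    (by
      intro X Y
      simp only [hq, Sym2.lift_mk]
      rw [homDensity_induce, mul_div_cancel₀ _ hN.ne'])
  have hH := homDensity_total H G bag htd.2.2.1
  rw [ge_iff_le, hH, le_div_iff₀ hN]
  refine le_trans (le_of_eq ?_) hmain
  have : ∀ e, N * t / (N * q e) = t / q e := fun e => mul_div_mul_left _ _ hN.ne'
  simp only [this]
  rw [Finset.prod_div_distrib, Finset.prod_const, ← htd.1.card_edgeFinset, pow_succ]
  ring
end

section
/- For every η > 0 and every integer r ≥ 2 there exists ρ > 0 and n₀ such that for every d ∈ (0,1] and every (ρ,d)-dense graph G with at least n₀ vertices, t_{K_r}(G) ≥ d^{r(r−1)/2} − η, where K_r is the complete graph on r vertices. -/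
open MeasureTheory

open Classical in
/-- Recursive count of ordered `r`-cliques inside `X`. -/
noncomputable def cliqueTuples {β : Type} [Fintype β] (G : SimpleGraph β) : ℕ → Finset β → ℕ
  | 0, _ => 1
  | r + 1, X => ∑ v ∈ X, cliqueTuples G r (X.filter (fun w => G.Adj v w))

/-- The graph of edges inside `X`. -/
def insideGraph {β : Type} (G : SimpleGraph β) (X : Finset β) : SimpleGraph β where
  Adj u v := G.Adj u v ∧ u ∈ X ∧ v ∈ X
  symm := ⟨fun _ _ h => ⟨h.1.symm, h.2.2, h.2.1⟩⟩
  loopless := ⟨fun _ h => G.irrefl h.1⟩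

theorem insideGraph_adj {β : Type} (G : SimpleGraph β) (X : Finset β) (u v : β) :
    (insideGraph G X).Adj u v ↔ G.Adj u v ∧ u ∈ X ∧ v ∈ X := Iff.rfl

open Classical in
theorem sum_deg_inside {β : Type} [Fintype β] (G : SimpleGraph β) (X : Finset β) :
    ∑ v ∈ X, (X.filter (fun w => G.Adj v w)).card =
      2 * Nat.card {e : Sym2 β // e ∈ G.edgeSet ∧ ∀ v ∈ e, v ∈ X} := by
  have h := (insideGraph G X).sum_degrees_eq_twice_card_edges
  have h1 : (insideGraph G X).edgeFinset.card =
      Nat.card {e : Sym2 β // e ∈ G.edgeSet ∧ ∀ v ∈ e, v ∈ X} := by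
    rw [Nat.card_eq_fintype_card, Fintype.card_subtype]
    congr 1
    ext e
    induction e with
    | _ a b => simp [insideGraph_adj]
  rw [← h1, ← h]
  rw [← Finset.sum_subset (Finset.subset_univ X)]
  · apply Finset.sum_congr rfl
    intro v hv
    rw [← SimpleGraph.card_neighborFinset_eq_degree]
    congr 1
    ext w
    simp [insideGraph_adj, hv, and_comm]
  · intro v _ hv
    rw [← SimpleGraph.card_neighborFinset_eq_degree, Finset.card_eq_zero]
    ext w
    simp [insideGraph_adj, hv]

open Classical in
theorem cliqueTuples_le {β : Type} [Fintype β] (G : SimpleGraph β) (r : ℕ) :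
    ∀ X : Finset β, cliqueTuples G r X ≤
      Nat.card {f : Fin r → β // (∀ i, f i ∈ X) ∧ ∀ i j, i ≠ j → G.Adj (f i) (f j)} := by
  induction r with
  | zero =>
    intro X
    simp [cliqueTuples]
  | succ r ih =>
    intro X
    have h1 : cliqueTuples G (r + 1) X ≤ Nat.card (Σ v : X, {f : Fin r → β //
        (∀ i, f i ∈ X.filter (fun w => G.Adj v w)) ∧ ∀ i j, i ≠ j → G.Adj (f i) (f j)}) := by
      rw [Nat.card_sigma, cliqueTuples, ← Finset.sum_coe_sort]
      exact Finset.sum_le_sum fun v _ => ih _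
    refine h1.trans ?_
    refine Nat.card_le_card_of_injective (fun p => ⟨Fin.cons p.1.1 p.2.1, ?_, ?_⟩) ?_
    · intro i
      refine Fin.cases ?_ (fun i => ?_) i
      · simp
      · simpa using (Finset.mem_filter.1 (p.2.2.1 i)).1
    · intro i j
      have hp : ∀ i, G.Adj p.1.1 (p.2.1 i) := fun i => (Finset.mem_filter.1 (p.2.2.1 i)).2
      refine Fin.cases ?_ (fun i => ?_) i <;> refine Fin.cases ?_ (fun j => ?_) j
      · simp
      · intro _; simpa using hp j
      · intro _; simpa using (hp i).symm
      · intro hij; simpa using p.2.2.2 i j (fun h => hij (by rw [h]))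
    · rintro ⟨⟨v, hv⟩, f, hf⟩ ⟨⟨w, hw⟩, g, hg⟩ h
      have h2 := congrArg Subtype.val h
      dsimp only at h2
      obtain ⟨h3, h4⟩ := Fin.cons_injective2 (α := fun _ => β) h2
      subst h3
      subst h4
      rfl

open Classical in
theorem cliqueTuples_ge {β : Type} [Fintype β] (G : SimpleGraph β) (ρ d : ℝ) (hρ : 0 < ρ)
    (hρ1 : ρ ≤ 1) (hd : 0 < d) (hd1 : d ≤ 1) (hG : LocallyDense G ρ d) (r : ℕ) :
    ∀ X : Finset β, d ^ (r.choose 2) * (X.card : ℝ) ^ r - ρ * (Fintype.card β : ℝ) ^ r ≤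
      cliqueTuples G r X := by
  induction r with
  | zero => intro X; simp [cliqueTuples]; exact hρ.le
  | succ r ih =>
    intro X
    set n : ℝ := (Fintype.card β : ℝ) with hn
    have hn0 : 0 ≤ n := by positivity
    have hXn : (X.card : ℝ) ≤ n := by rw [hn]; exact_mod_cast Finset.card_le_univ X
    have hX0 : (0 : ℝ) ≤ X.card := by positivity
    by_cases hX : ρ * n ≤ X.card
    swap
    · push Not at hX
      have h1 : (X.card : ℝ) ^ (r + 1) ≤ (ρ * n) ^ (r + 1) := by gcongr
      have h2 : (ρ * n) ^ (r + 1) ≤ ρ * n ^ (r + 1) := by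
        rw [mul_pow]
        gcongr
        exact pow_le_of_le_one hρ.le hρ1 (by omega)
      have h3 : d ^ ((r + 1).choose 2) * (X.card : ℝ) ^ (r + 1) ≤ (X.card : ℝ) ^ (r + 1) :=
        mul_le_of_le_one_left (by positivity) (pow_le_one₀ hd.le hd1)
      have h4 : (0 : ℝ) ≤ cliqueTuples G (r + 1) X := by positivity
      linarith
    · have hdeg := sum_deg_inside G X
      have hdeg' : d * (X.card : ℝ) ^ 2 ≤
          ∑ v ∈ X, ((X.filter (fun w => G.Adj v w)).card : ℝ) := by
        have h := hG X hX
        have : (∑ v ∈ X, ((X.filter (fun w => G.Adj v w)).card : ℝ)) =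
          2 * (Nat.card {e : Sym2 β // e ∈ G.edgeSet ∧ ∀ v ∈ e, v ∈ X} : ℝ) := by
          exact_mod_cast hdeg
        rw [this]; linarith
      have hpow : d ^ r * (X.card : ℝ) ^ (r + 1) ≤
          ∑ v ∈ X, ((X.filter (fun w => G.Adj v w)).card : ℝ) ^ r := by
        rcases r with _ | s
        · simp
        rcases X.eq_empty_or_nonempty with rfl | hne
        · simp
        have hpos : (0 : ℝ) < X.card := by exact_mod_cast hne.card_pos
        have hp := pow_sum_div_card_le_sum_pow (s := X)
          (f := fun v => ((X.filter (fun w => G.Adj v w)).card : ℝ)) (n := s)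
          (fun _ _ => by positivity)
        refine le_trans ?_ hp
        rw [le_div_iff₀ (by positivity)]
        calc _ = (d * (X.card : ℝ) ^ 2) ^ (s + 1) := by ring
          _ ≤ _ := by gcongr
      have hsum : ∑ v ∈ X, (d ^ (r.choose 2) * ((X.filter (fun w => G.Adj v w)).card : ℝ) ^ r
          - ρ * n ^ r) ≤ cliqueTuples G (r + 1) X := by
        rw [cliqueTuples]
        push_cast
        exact Finset.sum_le_sum fun v _ => ih _
      refine le_trans ?_ hsum
      rw [Finset.sum_sub_distrib, ← Finset.mul_sum, Finset.sum_const, nsmul_eq_mul]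
      have h1 : d ^ (r.choose 2) * (d ^ r * (X.card : ℝ) ^ (r + 1)) ≤ d ^ (r.choose 2) *
          ∑ v ∈ X, ((X.filter (fun w => G.Adj v w)).card : ℝ) ^ r := by gcongr
      have h2 : (X.card : ℝ) * (ρ * n ^ r) ≤ n * (ρ * n ^ r) := by gcongr
      have h3 : d ^ ((r + 1).choose 2) = d ^ (r.choose 2) * d ^ r := by
        rw [Nat.choose_succ_succ' r 1, Nat.choose_one_right, pow_add, mul_comm]
      rw [h3, pow_succ n]
      linarith

theorem stmt7 (η : ℝ) (hη : 0 < η) (r : ℕ) (hr : 2 ≤ r) :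
    ∃ (ρ : ℝ) (n₀ : ℕ), 0 < ρ ∧
      ∀ (d : ℝ), 0 < d → d ≤ 1 →
        ∀ (β : Type) [Fintype β] (G : SimpleGraph β),
          n₀ ≤ Fintype.card β → LocallyDense G ρ d →
            homDensity (⊤ : SimpleGraph (Fin r)) G ≥ d ^ (r * (r - 1) / 2) - η := by
  refine ⟨min η 1, 1, by positivity, ?_⟩
  intro d hd hd1 β _ G hn hG
  have h := cliqueTuples_ge G (min η 1) d (by positivity) (min_le_right _ _) hd hd1 hG r Finset.univ
  have h2 := cliqueTuples_le G r Finset.univ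
  have h3 : Nat.card {f : Fin r → β // (∀ i, f i ∈ (Finset.univ : Finset β)) ∧
      ∀ i j, i ≠ j → G.Adj (f i) (f j)} ≤ Nat.card ((⊤ : SimpleGraph (Fin r)) →g G) := by
    haveI : Finite ((⊤ : SimpleGraph (Fin r)) →g G) := DFunLike.finite _
    refine Nat.card_le_card_of_injective
      (fun f => (⟨f.1, fun {a b} hab => f.2.2 a b hab⟩ : (⊤ : SimpleGraph (Fin r)) →g G)) ?_
    intro f g hfg
    apply Subtype.ext
    exact congrArg (fun k : (⊤ : SimpleGraph (Fin r)) →g G => (k : Fin r → β)) hfg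
  have h4 : (cliqueTuples G r Finset.univ : ℝ) ≤
      (Nat.card ((⊤ : SimpleGraph (Fin r)) →g G) : ℝ) := by exact_mod_cast h2.trans h3
  have hpos : (0 : ℝ) < Fintype.card β := by exact_mod_cast hn
  rw [ge_iff_le, homDensity, Fintype.card_fin, le_div_iff₀ (by positivity), ← Nat.choose_two_right]
  rw [Finset.card_univ] at h
  have h5 : min η 1 * (Fintype.card β : ℝ) ^ r ≤ η * (Fintype.card β : ℝ) ^ r := by
    gcongr
    exact min_le_left _ _
  linarith
end

section
/- Let δ > 0, let ℓ ≥ 1 and let r₁ ≥ 1, r₂, …, r_ℓ be positive integers, and set r = r₁ + r₂ + ⋯ + r_ℓ. Then there exists ρ > 0 and n₀ such that for every d ∈ (0,1] and every (ρ,d)-dense graph G with at least n₀ vertices, t_{K(r₁,r₂,…,r_ℓ)}(G) ≥ (d^{r−r₁} − δ) · t_{K(r₁−1,r₂,…,r_ℓ)}(G). -/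
open MeasureTheory

open Finset in
/-- Common neighbourhood of a map into the vertex set. -/
noncomputable def cnb {α β : Type*} [Fintype β] (G : SimpleGraph β) (f : α → β) : Finset β :=
  by classical exact Finset.univ.filter (fun v => ∀ x, G.Adj v (f x))

theorem mem_cnb {α β : Type*} [Fintype β] (G : SimpleGraph β) (f : α → β) (v : β) :
    v ∈ cnb G f ↔ ∀ x, G.Adj v (f x) := by
  simp [cnb]

/-- The complete multipartite graph with parts of given sizes. -/
abbrev KM {ℓ : ℕ} (q : Fin ℓ → ℕ) : SimpleGraph (Σ i : Fin ℓ, Fin (q i)) :=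
  SimpleGraph.completeMultipartiteGraph (fun i : Fin ℓ => Fin (q i))

/-- Splitting a homomorphism along the first part. -/
noncomputable def splitHom {β : Type} [Fintype β] (G : SimpleGraph β) {ℓ : ℕ}
    (r : Fin (ℓ + 1) → ℕ) :
    (KM r →g G) ≃ Σ φ : KM (fun i => r i.succ) →g G, (Fin (r 0) → {v // v ∈ cnb G φ}) where
  toFun f := ⟨⟨fun x => f ⟨x.1.succ, x.2⟩, by
      rintro ⟨i, x⟩ ⟨j, y⟩ h
      apply f.map_rel
      simpa using h⟩, fun x => ⟨f ⟨0, x⟩, by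
      rw [mem_cnb]
      rintro ⟨i, y⟩
      apply f.map_rel
      simp [Fin.succ_ne_zero, eq_comm]⟩⟩
  invFun p := ⟨fun x => Fin.cases (motive := fun i => Fin (r i) → β)
      (fun x => (p.2 x : β)) (fun i x => p.1 ⟨i, x⟩) x.1 x.2, by
      rintro ⟨i, x⟩ ⟨j, y⟩ h
      have hij : i ≠ j := by simpa using h
      induction i using Fin.cases with
      | zero =>
        induction j using Fin.cases with
        | zero => exact absurd rfl hij
        | succ j => exact (mem_cnb _ _ _).1 (p.2 x).2 ⟨j, y⟩
      | succ i =>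
        induction j using Fin.cases with
        | zero => exact ((mem_cnb _ _ _).1 (p.2 y).2 ⟨i, x⟩).symm
        | succ j =>
          apply p.1.map_rel
          simpa using hij⟩
  left_inv f := by
    ext ⟨i, x⟩
    induction i using Fin.cases with
    | zero => rfl
    | succ i => rfl
  right_inv p := by rfl

theorem cnb_splitHom {β : Type} [Fintype β] [DecidableEq β] (G : SimpleGraph β) {ℓ : ℕ}
    (r : Fin (ℓ + 1) → ℕ) (f : KM r →g G) :
    cnb G f = cnb G (splitHom G r f).1 ∩ cnb G (fun x => ((splitHom G r f).2 x : β)) := by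
  ext v
  simp only [Finset.mem_inter, mem_cnb]
  constructor
  · intro h
    exact ⟨fun x => h ⟨x.1.succ, x.2⟩, fun x => h ⟨0, x⟩⟩
  · rintro ⟨h1, h2⟩ ⟨i, x⟩
    induction i using Fin.cases with
    | zero => exact h2 x
    | succ i => exact h1 ⟨i, x⟩

noncomputable instance homFintype {α β : Type} [Fintype α] [Fintype β]
    (H : SimpleGraph α) (G : SimpleGraph β) : Fintype (H →g G) := by
  classical
  exact Fintype.ofInjective (fun f : H →g G => (f : α → β)) DFunLike.coe_injective

/-- Power sums of common neighbourhood sizes. -/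
noncomputable def powA {β : Type} [Fintype β] (G : SimpleGraph β) {ℓ : ℕ} (q : Fin ℓ → ℕ)
    (s : ℕ) : ℝ := ∑ φ : KM q →g G, ((cnb G φ).card : ℝ) ^ s

theorem card_hom_eq {β : Type} [Fintype β] (G : SimpleGraph β) {ℓ : ℕ}
    (r : Fin (ℓ + 1) → ℕ) :
    (Nat.card (KM r →g G) : ℝ) = powA G (fun i => r i.succ) (r 0) := by
  classical
  rw [Nat.card_congr (splitHom G r), Nat.card_eq_fintype_card, Fintype.card_sigma, powA]
  push_cast
  refine Finset.sum_congr rfl fun φ _ => ?_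
  simp

theorem card_hom_update {β : Type} [Fintype β] (G : SimpleGraph β) {ℓ : ℕ}
    (r : Fin (ℓ + 1) → ℕ) (t : ℕ) :
    (Nat.card (KM (Function.update r 0 t) →g G) : ℝ) = powA G (fun i => r i.succ) t := by
  rw [card_hom_eq]
  simp [Function.update_of_ne]

/-- Degree of `v` into `W`. -/
theorem star_count {β : Type} [Fintype β] [DecidableEq β] (G : SimpleGraph β)
    [DecidableRel G.Adj] (W : Finset β) (t : ℕ) :
    ∑ g : Fin t → {v // v ∈ W}, ((W ∩ cnb G (fun x => (g x : β))).card : ℝ)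
      = ∑ v ∈ W, ((W.filter (G.Adj v)).card : ℝ) ^ t := by
  have h1 : ∀ g : Fin t → {v // v ∈ W}, ((W ∩ cnb G (fun x => (g x : β))).card : ℝ)
      = ∑ v ∈ W, ∏ x : Fin t, (if G.Adj v (g x) then (1:ℝ) else 0) := by
    intro g
    rw [Finset.card_eq_sum_ones]
    push_cast
    rw [← Finset.filter_mem_eq_inter, Finset.sum_filter]
    refine Finset.sum_congr rfl fun v _ => ?_
    rw [Finset.prod_ite_zero]
    simp [mem_cnb]
  simp_rw [h1]
  rw [Finset.sum_comm]
  refine Finset.sum_congr rfl fun v _ => ?_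
  rw [← Fintype.sum_pow (fun y : {v // v ∈ W} => if G.Adj v y then (1:ℝ) else 0) t]
  congr 1
  rw [Finset.sum_coe_sort W (fun y => if G.Adj v y then (1:ℝ) else 0)]
  simp

theorem pairs_ge {β : Type} [Fintype β] [DecidableEq β] (G : SimpleGraph β)
    [DecidableRel G.Adj] (W : Finset β) :
    2 * (Nat.card {e : Sym2 β // e ∈ G.edgeSet ∧ ∀ v ∈ e, v ∈ W} : ℝ)
      = ∑ v ∈ W, ((W.filter (G.Adj v)).card : ℝ) := by
  let G' : SimpleGraph β :=
    { Adj := fun u v => G.Adj u v ∧ u ∈ W ∧ v ∈ W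
      symm := ⟨fun u v h => ⟨h.1.symm, h.2.2, h.2.1⟩⟩
      loopless := ⟨fun u h => G.loopless.irrefl u h.1⟩ }
  have hdec : DecidableRel G'.Adj := fun u v => inferInstanceAs (Decidable (_ ∧ _ ∧ _))
  have h1 := G'.sum_degrees_eq_twice_card_edges
  have h2 : Nat.card {e : Sym2 β // e ∈ G.edgeSet ∧ ∀ v ∈ e, v ∈ W} = G'.edgeFinset.card := by
    rw [Nat.card_eq_fintype_card, Fintype.card_subtype]
    congr 1
    ext e
    induction e using Sym2.ind with
    | _ u v => simp [G']
  have h3 : ∑ v, G'.degree v = ∑ v ∈ W, (W.filter (G.Adj v)).card := by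
    rw [← Finset.sum_subset (Finset.subset_univ W)]
    · refine Finset.sum_congr rfl fun v hv => ?_
      rw [← SimpleGraph.card_neighborFinset_eq_degree]
      congr 1
      ext u
      simp [G', hv, and_comm]
    · intro v _ hv
      rw [← SimpleGraph.card_neighborFinset_eq_degree, Finset.card_eq_zero]
      ext u
      simp [G', hv]
  rw [h2, ← Nat.cast_sum, ← h3, h1]
  push_cast
  ring

theorem star_lower {β : Type} [Fintype β] [DecidableEq β] (G : SimpleGraph β)
    [DecidableRel G.Adj] (ρ d : ℝ) (hρ : 0 < ρ) (hd : 0 < d) (hG : LocallyDense G ρ d)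
    (W : Finset β) (t : ℕ) :
    d ^ t * ((W.card : ℝ) ^ (t + 1) - ρ * (Fintype.card β : ℝ) * (W.card : ℝ) ^ t)
      ≤ ∑ v ∈ W, ((W.filter (G.Adj v)).card : ℝ) ^ t := by
  by_cases hW : ρ * (Fintype.card β : ℝ) ≤ (W.card : ℝ)
  swap
  · have h0 : 0 ≤ ∑ v ∈ W, ((W.filter (G.Adj v)).card : ℝ) ^ t :=
      Finset.sum_nonneg fun _ _ => by positivity
    refine le_trans (mul_nonpos_of_nonneg_of_nonpos (by positivity) ?_) h0
    have : (0:ℝ) ≤ (W.card : ℝ) ^ t := by positivity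
    push Not at hW
    rw [pow_succ]
    nlinarith
  · have hn : 0 ≤ ρ * (Fintype.card β : ℝ) := by positivity
    have hm : (0:ℝ) ≤ (W.card : ℝ) := by positivity
    have hS : d * (W.card : ℝ) ^ 2 ≤ ∑ v ∈ W, ((W.filter (G.Adj v)).card : ℝ) := by
      rw [← pairs_ge]
      have := hG W hW
      linarith
    have h1 : d ^ t * ((W.card : ℝ) ^ (t + 1) - ρ * (Fintype.card β : ℝ) * (W.card : ℝ) ^ t)
        ≤ d ^ t * (W.card : ℝ) ^ (t + 1) := by
      apply mul_le_mul_of_nonneg_left _ (by positivity)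
      have : 0 ≤ ρ * (Fintype.card β : ℝ) * (W.card : ℝ) ^ t := by positivity
      linarith
    refine h1.trans ?_
    cases t with
    | zero => simp
    | succ k =>
      rcases hm.eq_or_lt with h0 | hpos
      · rw [← h0]
        simp only [ne_eq, Nat.add_eq_zero_iff, one_ne_zero, and_false, not_false_eq_true,
          zero_pow, mul_zero]
        exact Finset.sum_nonneg fun _ _ => by positivity
      · refine le_trans ?_ (pow_sum_div_card_le_sum_pow (fun i _ => by positivity) k)
        rw [le_div_iff₀ (by positivity)]
        calc d ^ (k + 1) * (W.card : ℝ) ^ (k + 1 + 1) * (W.card : ℝ) ^ k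
            = (d * (W.card : ℝ) ^ 2) ^ (k + 1) := by ring
          _ ≤ _ := pow_le_pow_left₀ (by positivity) hS _

theorem main_ineq {β : Type} [Fintype β] (G : SimpleGraph β) (ρ d : ℝ)
    (hρ : 0 < ρ) (hd : 0 < d) (hd1 : d ≤ 1) (hG : LocallyDense G ρ d) (ℓ : ℕ) :
    ∀ (q : Fin ℓ → ℕ) (s : ℕ),
      (d ^ (∑ i, q i) - ℓ * ρ) * (Fintype.card β : ℝ) * powA G q s ≤ powA G q (s + 1) := by
  classical
  induction ℓ with
  | zero =>
    intro q s
    have hc : ∀ φ : KM q →g G, ((cnb G φ).card : ℝ) = Fintype.card β := by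
      intro φ
      have : cnb G φ = Finset.univ := by
        ext v
        simp [mem_cnb]
      rw [this, Finset.card_univ]
    simp only [powA, hc, Finset.sum_const, nsmul_eq_mul]
    apply le_of_eq
    simp
    ring
  | succ ℓ ih =>
    intro q s
    have hA1 : powA G q 1 = ∑ φ : KM (fun i => q i.succ) →g G,
        ∑ v ∈ cnb G φ, (((cnb G φ).filter (G.Adj v)).card : ℝ) ^ (q 0) := by
      simp_rw [← star_count]
      rw [powA]
      simp_rw [pow_one, cnb_splitHom G q]
      rw [(splitHom G q).sum_comp (fun p => ((cnb G p.1 ∩ cnb G (fun x => (p.2 x : β))).card : ℝ)),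
        Fintype.sum_sigma]
    have hA0 : powA G q 0 = powA G (fun i => q i.succ) (q 0) := by
      rw [← card_hom_eq, powA, Nat.card_eq_fintype_card]
      simp
    have hnn : ∀ s, 0 ≤ powA G q s := fun s => Finset.sum_nonneg fun _ _ => by positivity
    -- the case s = 0
    have key : (d ^ (∑ i, q i) - (ℓ + 1 : ℕ) * ρ) * (Fintype.card β : ℝ) * powA G q 0
        ≤ powA G q 1 := by
      have h1 : d ^ (q 0) * (powA G (fun i => q i.succ) (q 0 + 1)
          - ρ * (Fintype.card β : ℝ) * powA G (fun i => q i.succ) (q 0)) ≤ powA G q 1 := by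
        rw [hA1]
        simp only [powA]
        rw [Finset.mul_sum, ← Finset.sum_sub_distrib, Finset.mul_sum]
        exact Finset.sum_le_sum fun φ _ => star_lower G ρ d hρ hd hG _ _
      refine le_trans ?_ h1
      have h2 := ih (fun i => q i.succ) (q 0)
      rw [← hA0] at h2 ⊢
      have h3 : d ^ (q 0) * ((d ^ (∑ i : Fin ℓ, q i.succ) - ℓ * ρ) * (Fintype.card β : ℝ)
          * powA G q 0 - ρ * (Fintype.card β : ℝ) * powA G q 0) ≤
          d ^ (q 0) * (powA G (fun i => q i.succ) (q 0 + 1)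
          - ρ * (Fintype.card β : ℝ) * powA G q 0) :=
        mul_le_mul_of_nonneg_left (by linarith) (by positivity)
      refine le_trans ?_ h3
      rw [Fin.sum_univ_succ, pow_add]
      have h4 : d ^ (q 0) ≤ 1 := pow_le_one₀ hd.le hd1
      have h5 : 0 ≤ ((ℓ : ℝ) + 1) * ρ * (Fintype.card β : ℝ) * powA G q 0 := by
        have := hnn 0
        positivity
      push_cast
      nlinarith
    -- Chebyshev
    have cheb : powA G q 1 * powA G q s ≤ powA G q 0 * powA G q (s + 1) := by
      have hm : Monovary (fun φ : KM q →g G => ((cnb G φ).card : ℝ))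
          (fun φ : KM q →g G => ((cnb G φ).card : ℝ) ^ s) := by
        intro i j hij
        by_contra hlt
        push Not at hlt
        exact absurd hij (not_lt.2 (pow_le_pow_left₀ (by positivity) hlt.le s))
      have := hm.sum_mul_sum_le_card_mul_sum
      simpa [powA, pow_succ'] using this
    rcases (hnn 0).eq_or_lt with h0 | hpos
    · have he : IsEmpty (KM q →g G) := by
        rw [← Fintype.card_eq_zero_iff]
        have : (Fintype.card (KM q →g G) : ℝ) = 0 := by
          rw [h0]
          simp [powA]
        exact_mod_cast this
      simp [powA]
    · have := mul_le_mul_of_nonneg_right key (hnn s)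
      refine le_of_mul_le_mul_left ?_ hpos
      refine le_trans ?_ cheb
      refine le_trans (le_of_eq ?_) this
      ring

theorem stmt9 (δ : ℝ) (hδ : 0 < δ) (ℓ : ℕ) (hℓ : 0 < ℓ) (r : Fin ℓ → ℕ)
    (hr : ∀ i, 1 ≤ r i) :
    ∃ (ρ : ℝ) (n₀ : ℕ), 0 < ρ ∧
      ∀ (d : ℝ), 0 < d → d ≤ 1 →
        ∀ (β : Type) [Fintype β] (G : SimpleGraph β),
          n₀ ≤ Fintype.card β → LocallyDense G ρ d →
            homDensity
                (SimpleGraph.completeMultipartiteGraph (fun i : Fin ℓ => Fin (r i))) G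
              ≥ (d ^ ((∑ i, r i) - r ⟨0, hℓ⟩) - δ) *
                homDensity
                  (SimpleGraph.completeMultipartiteGraph
                    (fun i : Fin ℓ => Fin (Function.update r ⟨0, hℓ⟩ (r ⟨0, hℓ⟩ - 1) i))) G := by
  obtain ⟨m, rfl⟩ : ∃ m, ℓ = m + 1 := ⟨ℓ - 1, by omega⟩
  refine ⟨δ / (m + 1), 1, by positivity, ?_⟩
  intro d hd hd1 β _ G hn hG
  have hz : (⟨0, hℓ⟩ : Fin (m + 1)) = 0 := rfl
  rw [hz]
  have hmain := main_ineq G (δ / (m + 1)) d (by positivity) hd hd1 hG m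
    (fun i => r i.succ) (r 0 - 1)
  have hnpos : (0:ℝ) < Fintype.card β := by exact_mod_cast hn
  have hr0 := hr 0
  rw [Nat.sub_add_cancel hr0] at hmain
  have hsum : (∑ i, r i) - r 0 = ∑ i : Fin m, r i.succ := by
    rw [Fin.sum_univ_succ]
    omega
  unfold homDensity
  have e1 := card_hom_eq G r
  have e2 := card_hom_update G r (r 0 - 1)
  have c1 : Fintype.card (Σ i : Fin (m + 1), Fin (r i)) = (r 0 - 1 + ∑ i : Fin m, r i.succ) + 1 := by
    simp [Fin.sum_univ_succ]
    omega
  have c2 : Fintype.card (Σ i : Fin (m + 1), Fin (Function.update r 0 (r 0 - 1) i))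
      = r 0 - 1 + ∑ i : Fin m, r i.succ := by
    simp [Fin.sum_univ_succ, Function.update_of_ne]
  rw [c1, c2, e1, e2, hsum, ge_iff_le, ← mul_div_assoc, pow_succ,
    div_le_div_iff₀ (by positivity) (by positivity)]
  have hp : 0 ≤ powA G (fun i => r i.succ) (r 0 - 1) :=
    Finset.sum_nonneg fun _ _ => by positivity
  have hδm : (m : ℝ) * (δ / (m + 1)) ≤ δ := by
    rw [← mul_div_assoc, div_le_iff₀ (by positivity)]
    nlinarith
  have h6 : (d ^ (∑ i : Fin m, r i.succ) - δ) * ((Fintype.card β : ℝ)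
      * powA G (fun i => r i.succ) (r 0 - 1)) ≤ powA G (fun i => r i.succ) (r 0) := by
    refine le_trans ?_ hmain
    rw [mul_assoc]
    exact mul_le_mul_of_nonneg_right (by linarith) (by positivity)
  have h7 := mul_le_mul_of_nonneg_right h6
    (by positivity : (0:ℝ) ≤ (Fintype.card β : ℝ) ^ (r 0 - 1 + ∑ i : Fin m, r i.succ))
  refine le_trans (le_of_eq ?_) h7
  ring
end
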